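/- Let (X_i)_{i∈ℤ} be a strictly stationary sequence of d-dimensional random vectors with continuous margins whose strong mixing coefficients satisfy α_r = O(r^{−a}) for some a > 1, and suppose Conditions (pd) and (noTies) hold. Define the finite-difference estimator Ċ_{j,n}(u) = (2 n^{−1/2})^{−1} { C_{1:n}(u_1,…,u_{j−1}, min(u_j + n^{−1/2}, 1), u_{j+1},…,u_d) − C_{1:n}(u_1,…,u_{j−1}, max(u_j − n^{−1/2}, 0), u_{j+1},…,u_d) }. Then: (i) there exists a constant K > 0 such that, almost surely, |Ċ_{j,n}(u)| ≤ K for all j ∈ {1,…,d}, all n ≥ 1 and all u ∈ [0,1]^d; (ii) for every δ ∈ (0,1/2) and every j ∈ {1,…,d}, sup{ |Ċ_{j,n}(u) − Ċ_j(u)| : u ∈ [0,1]^d, u_j ∈ [δ, 1−δ] } converges to 0 in outer probability as n → ∞. -/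

import Mathlib

/-!
The increments of the empirical copula in direction `j` are empirical masses of thin slabs
`{y j ∈ E' \ E, y k ∈ D k}` cut out by half-lines (`rankSet`); without ties the ranks are a
permutation of `1, …, n`, so such a slab has empirical thickness at most `2 n^{-1/2} + 1/n`, which
bounds the estimator by `3/2`.

Consistency requires that, with probability tending to one, the empirical measure and the law of
`X 1` differ by `o(n^{-1/2})` on all slabs of thickness `O(n^{-1/2})` (`GoodOsc`, established in
`exists_goodOsc`). The line of the `j`-th coordinate is cut into `N ≈ A n^{1/2}` strips of equal
mass, and each strip, in every other direction, into `K` pieces of equal mass with `K` fixed. By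
bracketing (`strip_bracket`, `goodOsc_of_strips`) it is enough to control finitely many families,
each consisting of `O(n^{1/2})` disjoint cells of mass `O(n^{-1/2})`. A variance bound for each
cell separately is too weak under polynomial mixing. Instead (`disjoint_family_bound`) the count in
each cell is compared with the sum of the conditional probabilities given the past at lag `q`. The
difference satisfies an exponential inequality (exponential supermartingales along the residue
classes modulo `q`), which survives the union over the cells. The sums of conditional probabilities
have, after averaging over random signs of the disjoint cells, total variance at most
`16 n ∑_{k ≥ q} α_k`, and this tail is small because `a > 1`.

On the good event the increment of the empirical copula is, up to `o(n^{-1/2})`, an increment of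
the copula between nearby points (`exists_copula_increment`); the mean value theorem and the uniform
continuity of the partial derivative on `{u j ∈ [δ/2, 1 - δ/2]}` finish the proof
(`exists_tolerance`).
-/

open Set Filter MeasureTheory

namespace Stmt17

variable {Ω : Type*} [MeasurableSpace Ω]

/-- σ-field generated by `(Y i)_{i ≤ p}`. -/
def sigmaLE {β : Type*} [MeasurableSpace β] (Y : ℤ → Ω → β) (p : ℤ) :
    MeasurableSpace Ω :=
  ⨆ i ∈ {i : ℤ | i ≤ p}, MeasurableSpace.comap (Y i) inferInstance

/-- σ-field generated by `(Y i)_{i ≥ p}`. -/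
def sigmaGE {β : Type*} [MeasurableSpace β] (Y : ℤ → Ω → β) (p : ℤ) :
    MeasurableSpace Ω :=
  ⨆ i ∈ {i : ℤ | p ≤ i}, MeasurableSpace.comap (Y i) inferInstance

/-- Strong mixing coefficient `α_r` of the sequence `Y`. -/
noncomputable def alphaMix {β : Type*} [MeasurableSpace β]
    (P : Measure Ω) (Y : ℤ → Ω → β) (r : ℕ) : ℝ :=
  sSup {x : ℝ | ∃ (p : ℤ) (A B : Set Ω),
    MeasurableSet[sigmaLE Y p] A ∧ MeasurableSet[sigmaGE Y (p + r)] B ∧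
    x = |(P (A ∩ B)).toReal - (P A).toReal * (P B).toReal|}

/-- Strict stationarity of a sequence indexed by `ℤ`. -/
def Stationary {β : Type*} [MeasurableSpace β]
    (P : Measure Ω) (Y : ℤ → Ω → β) : Prop :=
  ∀ k : ℤ, Measure.map (fun ω (i : ℤ) => Y (i + k) ω) P
    = Measure.map (fun ω (i : ℤ) => Y i ω) P

variable {d : ℕ}

/-- Rank `R_{ij}^{k:l}` of `X i ω j` among `X k ω j, …, X l ω j`. -/
noncomputable def rank (X : ℤ → Ω → Fin d → ℝ) (k l i : ℤ) (j : Fin d)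
    (ω : Ω) : ℕ :=
  ((Finset.Icc k l).filter fun m => X m ω j ≤ X i ω j).card

/-- Empirical copula `C_{k:l}` of `X k, …, X l` (with `C_{k:k−1} ≡ 0`). -/
noncomputable def empCop (X : ℤ → Ω → Fin d → ℝ) (k l : ℤ)
    (u : Fin d → ℝ) (ω : Ω) : ℝ :=
  (((Finset.Icc k l).card : ℝ))⁻¹ * ∑ i ∈ Finset.Icc k l,
    (if ∀ j, (rank X k l i j ω : ℝ) / ((Finset.Icc k l).card : ℝ) ≤ u j
      then (1 : ℝ) else 0)

/-- `λ_n(s,t) = (⌊nt⌋ − ⌊ns⌋)/n`. -/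
noncomputable def lam (n : ℕ) (s t : ℝ) : ℝ :=
  ((⌊(n : ℝ) * t⌋ : ℝ) - (⌊(n : ℝ) * s⌋ : ℝ)) / (n : ℝ)

/-- `j`-th marginal c.d.f. `F_j` of the stationary sequence. -/
noncomputable def margCdf (P : Measure Ω) (X : ℤ → Ω → Fin d → ℝ)
    (j : Fin d) (x : ℝ) : ℝ :=
  (P {ω | X 1 ω j ≤ x}).toReal

/-- The (unique) copula `C` of the stationary sequence, i.e. the c.d.f. of
`U_1 = (F_1(X_{11}),…,F_d(X_{1d}))`. -/
noncomputable def copula (P : Measure Ω) (X : ℤ → Ω → Fin d → ℝ)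
    (u : Fin d → ℝ) : ℝ :=
  (P {ω | ∀ j, margCdf P X j (X 1 ω j) ≤ u j}).toReal


/-- The finite-difference estimator `Ċ_{j,n}` of the `j`-th partial derivative of
the copula, based on the empirical copula `C_{1:n}`. -/
noncomputable def CdotEst (P : Measure Ω) (X : ℤ → Ω → Fin d → ℝ)
    (j : Fin d) (n : ℕ) (u : Fin d → ℝ) (ω : Ω) : ℝ :=
  (2 * (n : ℝ) ^ (-(1 / 2 : ℝ)))⁻¹ *
    (empCop X 1 (n : ℤ)
        (Function.update u j (min (u j + (n : ℝ) ^ (-(1 / 2 : ℝ))) 1)) ω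
      - empCop X 1 (n : ℤ)
        (Function.update u j (max (u j - (n : ℝ) ^ (-(1 / 2 : ℝ))) 0)) ω)

/-! ### Covariance inequality for strong mixing -/

lemma sigmaLE_le {β : Type*} [MeasurableSpace β] {Y : ℤ → Ω → β} (hY : ∀ i, Measurable (Y i))
    (p : ℤ) : sigmaLE Y p ≤ ‹MeasurableSpace Ω› :=
  iSup₂_le fun i _ => (hY i).comap_le

lemma sigmaGE_le {β : Type*} [MeasurableSpace β] {Y : ℤ → Ω → β} (hY : ∀ i, Measurable (Y i))
    (p : ℤ) : sigmaGE Y p ≤ ‹MeasurableSpace Ω› :=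
  iSup₂_le fun i _ => (hY i).comap_le

lemma sigmaLE_mono {S β : Type*} [MeasurableSpace β] (Y : ℤ → S → β) {p p' : ℤ} (h : p ≤ p') :
    sigmaLE Y p ≤ sigmaLE Y p' :=
  iSup₂_le fun i hi => le_iSup₂_of_le i (le_trans (show i ≤ p from hi) h) le_rfl

lemma measurable_sigmaLE {S β : Type*} [MeasurableSpace β] (Y : ℤ → S → β) {i p : ℤ} (h : i ≤ p) :
    Measurable[sigmaLE Y p] (Y i) :=
  Measurable.of_comap_le (le_iSup₂_of_le i h le_rfl)

lemma measurable_sigmaGE {S β : Type*} [MeasurableSpace β] (Y : ℤ → S → β) {i p : ℤ} (h : p ≤ i) :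
    Measurable[sigmaGE Y p] (Y i) :=
  Measurable.of_comap_le (le_iSup₂_of_le i h le_rfl)

lemma abs_le_alphaMix {β : Type*} [MeasurableSpace β] (P : Measure Ω) [IsProbabilityMeasure P]
    (Y : ℤ → Ω → β) (r : ℕ) (p : ℤ) {A B : Set Ω}
    (hA : MeasurableSet[sigmaLE Y p] A) (hB : MeasurableSet[sigmaGE Y (p + r)] B) :
    |P.real (A ∩ B) - P.real A * P.real B| ≤ alphaMix P Y r := by
  refine le_csSup ⟨1, ?_⟩ ⟨p, A, B, hA, hB, rfl⟩
  rintro x ⟨_, A, B, _, _, rfl⟩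
  change |P.real (A ∩ B) - P.real A * P.real B| ≤ 1
  have h1 : P.real (A ∩ B) ≤ 1 := measureReal_le_one
  have h2 : P.real A ≤ 1 := measureReal_le_one
  have h3 : P.real B ≤ 1 := measureReal_le_one
  have h4 : 0 ≤ P.real (A ∩ B) := measureReal_nonneg
  have h5 : 0 ≤ P.real A := measureReal_nonneg
  have h6 : 0 ≤ P.real B := measureReal_nonneg
  rw [abs_le]
  constructor <;> nlinarith

lemma alphaMix_nonneg {β : Type*} [MeasurableSpace β] (P : Measure Ω) [IsProbabilityMeasure P]
    (Y : ℤ → Ω → β) (r : ℕ) : 0 ≤ alphaMix P Y r :=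
  (abs_nonneg _).trans
    (abs_le_alphaMix P Y r 0 (A := ∅) (B := ∅)
      (@MeasurableSet.empty _ (sigmaLE Y 0)) (@MeasurableSet.empty _ (sigmaGE Y (0 + r))))

lemma integral_mul_condExp {S : Type*} {m m0 : MeasurableSpace S} {P : Measure S}
    [IsProbabilityMeasure P] (hm : m ≤ m0) {G f : S → ℝ} {b : ℝ}
    (hG : StronglyMeasurable[m] G) (hGb : ∀ᵐ ω ∂P, |G ω| ≤ b) (hf : Integrable f P) :
    ∫ ω, G ω * (P[f|m]) ω ∂P = ∫ ω, G ω * f ω ∂P := by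
  have h := condExp_stronglyMeasurable_mul_of_bound hm hG hf b hGb
  rw [← integral_condExp hm (f := fun ω => G ω * f ω)]
  exact integral_congr_ae h.symm

/-- If all integrals of `H` over `m`-measurable sets are at most `c` in size, then `E|E[H|m]| ≤
2c`; this bounds the integral of `H` against bounded `m`-measurable functions. -/
lemma abs_integral_mul_le {S : Type*} {m m0 : MeasurableSpace S} {P : Measure S}
    [IsProbabilityMeasure P] (hm : m ≤ m0) {Y H : S → ℝ} {b c : ℝ} (hb : 0 ≤ b)
    (hY : StronglyMeasurable[m] Y) (hYb : ∀ᵐ ω ∂P, |Y ω| ≤ b) (hH : Integrable H P)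
    (hc : ∀ A, MeasurableSet[m] A → |∫ ω in A, H ω ∂P| ≤ c) :
    |∫ ω, Y ω * H ω ∂P| ≤ 2 * b * c := by
  set h := P[H|m] with hh
  have hhm : StronglyMeasurable[m] h := stronglyMeasurable_condExp
  have hhi : Integrable h P := integrable_condExp
  rw [← integral_mul_condExp hm hY hYb hH]
  have hA : MeasurableSet[m] {ω | 0 ≤ h ω} :=
    @measurableSet_le _ _ _ _ _ m _ _ _ (fun _ => 0) h (@measurable_const _ _ _ m _) hhm.measurable
  have hA0 : MeasurableSet {ω | 0 ≤ h ω} := hm _ hA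
  have habs : ∫ ω, |h ω| ∂P ≤ 2 * c := by
    rw [← integral_add_compl hA0 hhi.abs]
    have e1 : ∫ ω in {ω | 0 ≤ h ω}, |h ω| ∂P = ∫ ω in {ω | 0 ≤ h ω}, H ω ∂P := by
      rw [← setIntegral_condExp hm hH hA]
      exact setIntegral_congr_fun hA0 fun ω hω => abs_of_nonneg hω
    have e2 : ∫ ω in {ω | 0 ≤ h ω}ᶜ, |h ω| ∂P = - ∫ ω in {ω | 0 ≤ h ω}ᶜ, H ω ∂P := by
      rw [← setIntegral_condExp hm hH hA.compl, ← integral_neg]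
      exact setIntegral_congr_fun hA0.compl fun ω hω => abs_of_neg (not_le.1 hω)
    rw [e1, e2]
    have := hc _ hA
    have := hc _ hA.compl
    grind
  calc |∫ ω, Y ω * h ω ∂P| ≤ ∫ ω, |Y ω * h ω| ∂P := abs_integral_le_integral_abs
    _ ≤ ∫ ω, b * |h ω| ∂P := by
        refine integral_mono_of_nonneg (ae_of_all _ fun _ => abs_nonneg _)
          (hhi.abs.const_mul b) ?_
        filter_upwards [hYb] with ω hω
        rw [abs_mul]
        exact mul_le_mul_of_nonneg_right hω (abs_nonneg _)
    _ = b * ∫ ω, |h ω| ∂P := integral_const_mul _ _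
    _ ≤ 2 * b * c := by nlinarith

/-- Covariance inequality for bounded functions of the past and of the future. -/
lemma abs_cov_le {β : Type*} [MeasurableSpace β] (P : Measure Ω) [IsProbabilityMeasure P]
    {X : ℤ → Ω → β} (hX : ∀ i, Measurable (X i)) (r : ℕ) (p : ℤ) {Y W : Ω → ℝ} {b : ℝ}
    (hb : 0 ≤ b) (hY : StronglyMeasurable[sigmaLE X p] Y) (hYb : ∀ᵐ ω ∂P, |Y ω| ≤ b)
    (hW : StronglyMeasurable[sigmaGE X (p + r)] W) (hWb : ∀ᵐ ω ∂P, |W ω| ≤ 1) :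
    |∫ ω, Y ω * (W ω - ∫ ω', W ω' ∂P) ∂P| ≤ 4 * b * alphaMix P X r := by
  have hF := sigmaLE_le hX p
  have hG := sigmaGE_le hX (p + r)
  have hYi : Integrable Y P := .of_bound (hY.mono hF).aestronglyMeasurable b hYb
  have hWi : Integrable W P := .of_bound (hW.mono hG).aestronglyMeasurable 1 hWb
  have hYWi : Integrable (fun ω => Y ω * W ω) P :=
    hWi.bdd_mul (hY.mono hF).aestronglyMeasurable hYb
  have hsymm : ∫ ω, Y ω * (W ω - ∫ ω', W ω' ∂P) ∂P = ∫ ω, W ω * (Y ω - ∫ ω', Y ω' ∂P) ∂P := by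
    simp only [mul_sub]
    rw [integral_sub hYWi (hYi.mul_const _), integral_sub (by simpa only [mul_comm] using hYWi)
      (hWi.mul_const _), integral_mul_const, integral_mul_const]
    simp only [mul_comm]
  rw [hsymm]
  have key := abs_integral_mul_le (P := P) hG (b := 1) (c := 2 * b * alphaMix P X r) zero_le_one hW
    hWb (H := fun ω => Y ω - ∫ ω', Y ω' ∂P) (hYi.sub (integrable_const _)) ?_
  · linarith
  intro B hB
  have hB0 := hG _ hB
  have h1 : ∫ ω in B, (Y ω - ∫ ω', Y ω' ∂P) ∂P
      = ∫ ω, Y ω * (B.indicator (fun _ => (1:ℝ)) ω - P.real B) ∂P := by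
    have hYB : Integrable (fun ω => Y ω * B.indicator (fun _ => (1:ℝ)) ω) P := by
      have : (fun ω => Y ω * B.indicator (fun _ => (1:ℝ)) ω) = B.indicator Y := by
        ext ω; by_cases h : ω ∈ B <;> simp [h]
      rw [this]; exact hYi.indicator hB0
    rw [integral_sub hYi.integrableOn (integrable_const _)]
    simp only [mul_sub]
    rw [integral_sub hYB (hYi.mul_const _), integral_mul_const, ← integral_indicator hB0]
    congr 1
    · congr 1; ext ω; by_cases h : ω ∈ B <;> simp [h]
    · simp [mul_comm]
  rw [h1]
  refine abs_integral_mul_le hF hb hY hYb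
    (((integrable_const (1:ℝ)).indicator hB0).sub (integrable_const _)) fun A hA => ?_
  have hA0 := hF _ hA
  rw [integral_sub ((integrable_const (1:ℝ)).indicator hB0).integrableOn (integrable_const _)]
  have h2 : ∫ ω in A, B.indicator (fun _ => (1:ℝ)) ω ∂P = P.real (A ∩ B) := by
    rw [setIntegral_indicator hB0]; simp
  rw [h2]
  simp only [integral_const, smul_eq_mul, MeasurableSet.univ, measureReal_restrict_apply,
    univ_inter]
  exact abs_le_alphaMix P X r p hA hB


/-! ### Conditional probabilities given the distant past -/

/-- The conditional expectation of `f (X (i+1))` given the past up to time `i + 1 - q`. -/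
noncomputable def pastExp {β : Type*} [MeasurableSpace β] (P : Measure Ω) (X : ℤ → Ω → β) (q : ℕ)
    (f : β → ℝ) (i : ℕ) : Ω → ℝ :=
  P[fun ω => f (X (i + 1) ω) | sigmaLE X ((i : ℤ) + 1 - q)]

section
variable {β : Type*} [MeasurableSpace β] {P : Measure Ω} [IsProbabilityMeasure P]
  {X : ℤ → Ω → β} {q : ℕ}

lemma stronglyMeasurable_pastExp (f : β → ℝ) (i : ℕ) :
    StronglyMeasurable[sigmaLE X ((i : ℤ) + 1 - q)] (pastExp P X q f i) :=
  stronglyMeasurable_condExp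

lemma aestronglyMeasurable_pastExp (hX : ∀ i, Measurable (X i)) (f : β → ℝ) (i : ℕ) :
    AEStronglyMeasurable (pastExp P X q f i) P :=
  ((stronglyMeasurable_pastExp f i).mono (sigmaLE_le hX _)).aestronglyMeasurable

lemma integrable_comp (hX : ∀ i, Measurable (X i)) {f : β → ℝ} (hf : Measurable f)
    (hfb : ∀ y, |f y| ≤ 1) (i : ℤ) : Integrable (fun ω => f (X i ω)) P :=
  .of_bound (hf.comp (hX i)).aestronglyMeasurable 1 (ae_of_all _ fun _ => hfb _)

lemma abs_pastExp_le {f : β → ℝ} (hfb : ∀ y, |f y| ≤ 1) (i : ℕ) :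
    ∀ᵐ ω ∂P, |pastExp P X q f i ω| ≤ 1 := by
  have := ae_bdd_condExp_of_ae_bdd (μ := P) (m := sigmaLE X ((i : ℤ) + 1 - q)) (R := 1)
    (f := fun ω => f (X (i + 1) ω)) (ae_of_all _ fun _ => by simpa using hfb _)
  simpa [pastExp] using this

lemma memLp_of_bdd {Y : Ω → ℝ} (hY : AEStronglyMeasurable Y P) {b : ℝ}
    (hb : ∀ᵐ ω ∂P, |Y ω| ≤ b) : MemLp Y 2 P := .of_bound hY b hb

lemma memLp_pastExp_sub (hX : ∀ i, Measurable (X i)) {f : β → ℝ} (hfb : ∀ y, |f y| ≤ 1) (i : ℕ)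
    (c : ℝ) : MemLp (fun ω => pastExp P X q f i ω - c) 2 P :=
  (memLp_of_bdd (aestronglyMeasurable_pastExp hX f i) (abs_pastExp_le hfb i)).sub (memLp_const c)

/-- The predictable fluctuation has variance at most `16 n τ`, where `τ` bounds the tail sum
`∑_{k ≥ q} α_k`: its covariance at lag `k` is at most `8 α_{q+k}`. -/
lemma integral_sq_pastExp_le (hX : ∀ i, Measurable (X i))
    (hlaw : ∀ i, P.map (X i) = P.map (X 1)) {τ : ℝ}
    (hτ : ∀ N, ∑ k ∈ Finset.range N, alphaMix P X (k + q) ≤ τ)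
    {f : β → ℝ} (hf : Measurable f) (hfb : ∀ y, |f y| ≤ 1) (n : ℕ) :
    ∫ ω, (∑ i ∈ Finset.range n, (pastExp P X q f i ω - ∫ ω', f (X 1 ω') ∂P)) ^ 2 ∂P
      ≤ 16 * n * τ := by
  set c := ∫ ω', f (X 1 ω') ∂P with hc
  have hci : ∀ i, ∫ ω', f (X i ω') ∂P = c := by
    intro i
    rw [hc, ← integral_map (hX i).aemeasurable hf.aestronglyMeasurable,
      ← integral_map (hX 1).aemeasurable hf.aestronglyMeasurable, hlaw i]
  have hcb : |c| ≤ 1 := by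
    have := norm_integral_le_of_norm_le_const (μ := P) (f := fun ω' => f (X 1 ω')) (C := 1)
      (ae_of_all _ fun _ => hfb _)
    simpa using this
  set g : ℕ → Ω → ℝ := fun i ω => pastExp P X q f i ω - c with hg
  have hgL : ∀ i, MemLp (g i) 2 P := fun i => memLp_pastExp_sub hX hfb i c
  have hgb : ∀ i, ∀ᵐ ω ∂P, |g i ω| ≤ 2 := by
    intro i
    filter_upwards [abs_pastExp_le (P := P) (X := X) (q := q) hfb i] with ω hω
    calc |g i ω| ≤ |pastExp P X q f i ω| + |c| := abs_sub _ _
      _ ≤ 2 := by linarith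
  have hgm : ∀ i : ℕ, StronglyMeasurable[sigmaLE X ((i : ℤ) + 1 - q)] (g i) := fun i =>
    (stronglyMeasurable_pastExp f i).sub stronglyMeasurable_const
  have hgi' : ∀ i, Integrable (g i) P := fun i => (hgL i).integrable one_le_two
  have hcov : ∀ n i : ℕ, i ≤ n → ∫ ω, g i ω * g n ω ∂P ≤ 8 * alphaMix P X (n - i + q) := by
    intro n i hi
    have hgi := hgi' i
    have e : ∫ ω, g i ω * g n ω ∂P
        = ∫ ω, g i ω * (f (X (n + 1) ω) - ∫ ω', f (X (n + 1) ω') ∂P) ∂P := by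
      rw [hci]
      have h1 := integral_mul_condExp (P := P) (sigmaLE_le hX ((n : ℤ) + 1 - q))
        ((hgm i).mono (sigmaLE_mono X (by gcongr))) (hgb i)
        (integrable_comp hX hf hfb ((n : ℤ) + 1))
      have hi1 : Integrable (fun ω => g i ω * pastExp P X q f n ω) P :=
        hgi.mul_bdd (aestronglyMeasurable_pastExp hX f n) (abs_pastExp_le hfb n)
      have hi2 : Integrable (fun ω => g i ω * f (X (n + 1) ω)) P :=
        hgi.mul_bdd (hf.comp (hX _)).aestronglyMeasurable (ae_of_all _ fun _ => hfb _)
      have e1 : ∀ ω, g i ω * g n ω = g i ω * pastExp P X q f n ω - g i ω * c := fun ω => mul_sub _ _ _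
      simp only [e1, mul_sub (g i _) (f _)]
      rw [integral_sub hi1 (hgi.mul_const c), integral_sub hi2 (hgi.mul_const c)]
      exact congrArg (· - _) h1
    rw [e]
    have h2 := abs_cov_le P hX (n - i + q) ((i : ℤ) + 1 - q) (b := 2) (by norm_num) (hgm i) (hgb i)
      (W := fun ω => f (X (n + 1) ω)) ?_ (ae_of_all _ fun _ => hfb _)
    · calc _ ≤ _ := le_abs_self _
        _ ≤ _ := h2
        _ = _ := by ring
    · have : (i : ℤ) + 1 - q + ((n - i + q : ℕ) : ℤ) = n + 1 := by push_cast [hi]; ring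
      rw [this]
      exact (hf.comp (measurable_sigmaGE X le_rfl)).stronglyMeasurable
  induction n with
  | zero => simp
  | succ n ih =>
    have hS : MemLp (fun ω => ∑ i ∈ Finset.range n, g i ω) 2 P :=
      memLp_finsetSum _ fun i _ => hgL i
    have hprod : ∀ i, Integrable (fun ω => g i ω * g n ω) P := fun i =>
      (hgL i).integrable_mul (hgL n)
    have h1 : ∫ ω, (∑ i ∈ Finset.range (n + 1), g i ω) ^ 2 ∂P
        ≤ ∫ ω, (∑ i ∈ Finset.range n, g i ω) ^ 2 ∂P
          + 2 * ∑ i ∈ Finset.range (n + 1), ∫ ω, g i ω * g n ω ∂P := by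
      rw [← integral_finsetSum _ fun i _ => hprod i, ← integral_const_mul,
        ← integral_add hS.integrable_sq ((integrable_finsetSum _ fun i _ => hprod i).const_mul 2)]
      refine integral_mono (memLp_finsetSum _ fun i _ => hgL i).integrable_sq
        (hS.integrable_sq.add ((integrable_finsetSum _ fun i _ => hprod i).const_mul 2)) fun ω => ?_
      simp only [Finset.sum_range_succ, ← Finset.sum_mul]
      nlinarith [sq_nonneg (g n ω)]
    have h2 : ∑ i ∈ Finset.range (n + 1), ∫ ω, g i ω * g n ω ∂P ≤ 8 * τ := by
      calc _ ≤ ∑ i ∈ Finset.range (n + 1), 8 * alphaMix P X (n - i + q) :=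
            Finset.sum_le_sum fun i hi => hcov n i (Finset.mem_range_succ_iff.1 hi)
        _ = 8 * ∑ i ∈ Finset.range (n + 1), alphaMix P X (i + q) := by
            rw [← Finset.mul_sum, ← Finset.sum_range_reflect (fun k => alphaMix P X (k + q))]
            congr 1
        _ ≤ 8 * τ := by gcongr; exact hτ _
    push_cast
    linarith

/-- Averaging over signs: if all signed sums have second moment at most `B`, then so has the family
of summands in total. -/
lemma sum_integral_sq_le_of_signs {ι : Type*} (s : Finset ι) (T : ι → Ω → ℝ)
    (hT : ∀ i, MemLp (T i) 2 P) (B : ℝ) (R : Ω → ℝ) (hR : MemLp R 2 P)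
    (h : ∀ e : ι → ℝ, (∀ i, e i = 1 ∨ e i = -1) →
      ∫ ω, (R ω + ∑ i ∈ s, e i * T i ω) ^ 2 ∂P ≤ B) :
    ∫ ω, R ω ^ 2 ∂P + ∑ i ∈ s, ∫ ω, T i ω ^ 2 ∂P ≤ B := by
  classical
  induction s using Finset.induction_on generalizing R with
  | empty => simpa using h (fun _ => 1) (fun _ => Or.inl rfl)
  | insert a s ha ih =>
    have key : ∀ x : ℝ, (x = 1 ∨ x = -1) →
        ∫ ω, (R ω + x * T a ω) ^ 2 ∂P + ∑ i ∈ s, ∫ ω, T i ω ^ 2 ∂P ≤ B := by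
      intro x hx
      refine ih (fun ω => R ω + x * T a ω) (hR.add ((hT a).const_mul x)) fun e he => ?_
      refine le_trans (le_of_eq ?_) (h (Function.update e a x) fun i => ?_)
      · congr 1; ext ω
        rw [Finset.sum_insert ha, Function.update_self, add_assoc]
        congr 3
        exact Finset.sum_congr rfl fun i hi => by
          rw [Function.update_of_ne (ne_of_mem_of_not_mem hi ha)]
      · by_cases hi : i = a
        · subst hi; simpa using hx
        · rw [Function.update_of_ne hi]; exact he i
    have h1 := key 1 (Or.inl rfl)
    have h2 := key (-1) (Or.inr rfl)
    have h3 : ∫ ω, (R ω + 1 * T a ω) ^ 2 ∂P + ∫ ω, (R ω + (-1) * T a ω) ^ 2 ∂P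
        = 2 * ∫ ω, R ω ^ 2 ∂P + 2 * ∫ ω, T a ω ^ 2 ∂P := by
      have i1 : Integrable (fun ω => (R ω + 1 * T a ω) ^ 2) P :=
        (hR.add ((hT a).const_mul 1)).integrable_sq
      have i2 : Integrable (fun ω => (R ω + (-1) * T a ω) ^ 2) P :=
        (hR.add ((hT a).const_mul (-1))).integrable_sq
      rw [← integral_add i1 i2, ← integral_const_mul, ← integral_const_mul,
        ← integral_add (hR.integrable_sq.const_mul 2) ((hT a).integrable_sq.const_mul 2)]
      congr 1; ext ω; ring
    rw [Finset.sum_insert ha]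
    linarith

/-- Total variance of the predictable fluctuations over a disjoint family of sets: it is at most
`16 n τ` whatever the number of sets. -/
lemma sum_integral_sq_pastExp_le (hX : ∀ i, Measurable (X i))
    (hlaw : ∀ i, P.map (X i) = P.map (X 1)) {τ : ℝ}
    (hτ : ∀ N, ∑ k ∈ Finset.range N, alphaMix P X (k + q) ≤ τ)
    (N : ℕ) (B : ℕ → Set β) (hB : ∀ s, MeasurableSet (B s))
    (hdisj : ∀ s < N, ∀ t < N, s ≠ t → Disjoint (B s) (B t)) (n : ℕ) :
    ∑ s ∈ Finset.range N, ∫ ω, (∑ i ∈ Finset.range n,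
      (pastExp P X q ((B s).indicator 1) i ω - P.real (X 1 ⁻¹' B s))) ^ 2 ∂P ≤ 16 * n * τ := by
  have hind : ∀ s y, |(B s).indicator (1 : β → ℝ) y| ≤ 1 := by
    intro s y; by_cases h : y ∈ B s <;> simp [h]
  have hmeas : ∀ s, Measurable ((B s).indicator (1 : β → ℝ)) := fun s =>
    measurable_one.indicator (hB s)
  have h_integral : ∀ s, ∫ ω, (B s).indicator (1 : β → ℝ) (X 1 ω) ∂P = P.real (X 1 ⁻¹' B s) := by
    intro s
    rw [← integral_indicator_one (hX 1 (hB s))]; rfl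
  have main := sum_integral_sq_le_of_signs (P := P) (Finset.range N)
    (fun s ω => ∑ i ∈ Finset.range n,
      (pastExp P X q ((B s).indicator 1) i ω - P.real (X 1 ⁻¹' B s)))
    (fun s => memLp_finsetSum _ fun i _ => memLp_pastExp_sub hX (hind s) i _) (16 * n * τ)
    (fun _ => 0) (memLp_const 0) ?_
  · simpa using main
  intro e he
  set f : β → ℝ := fun y => ∑ s ∈ Finset.range N, e s * (B s).indicator (1 : β → ℝ) y with hf
  have hfm : Measurable f := Finset.measurable_fun_sum _ fun s _ => (hmeas s).const_mul _
  have hfb : ∀ y, |f y| ≤ 1 := by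
    intro y
    by_cases hy : ∃ s < N, y ∈ B s
    · obtain ⟨s, hs, hys⟩ := hy
      have : f y = e s := by
        simp only [hf]
        rw [Finset.sum_eq_single s]
        · simp [hys]
        · intro t ht hts
          have : y ∉ B t := fun hyt =>
            Set.disjoint_left.1 (hdisj t (Finset.mem_range.1 ht) s hs hts) hyt hys
          simp [this]
        · intro h; exact absurd (Finset.mem_range.2 hs) h
      rw [this]
      rcases he s with h | h <;> simp [h]
    · push Not at hy
      have : f y = 0 := Finset.sum_eq_zero fun s hs => by
        simp [hy s (Finset.mem_range.1 hs)]
      simp [this]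
  have hfint : ∫ ω, f (X 1 ω) ∂P = ∑ s ∈ Finset.range N, e s * P.real (X 1 ⁻¹' B s) := by
    simp only [hf]
    rw [integral_finsetSum _ fun s _ =>
      (integrable_comp hX (hmeas s) (hind s) 1).const_mul _]
    exact Finset.sum_congr rfl fun s _ => by rw [integral_const_mul, h_integral]
  have hpe : ∀ i, pastExp P X q f i =ᵐ[P]
      fun ω => ∑ s ∈ Finset.range N, e s * pastExp P X q ((B s).indicator 1) i ω := by
    intro i
    have h1 := condExp_finsetSum (μ := P) (s := Finset.range N)
      (f := fun s => e s • fun ω => (B s).indicator (1 : β → ℝ) (X (i + 1) ω))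
      (fun s _ => (integrable_comp hX (hmeas s) (hind s) _).smul (e s))
      (sigmaLE X ((i : ℤ) + 1 - q))
    have h2 : ∀ᵐ ω ∂P, ∀ s, (P[e s • fun ω => (B s).indicator (1 : β → ℝ) (X (i + 1) ω) |
        sigmaLE X ((i : ℤ) + 1 - q)]) ω = e s * pastExp P X q ((B s).indicator 1) i ω :=
      ae_all_iff.2 fun s => condExp_smul (μ := P) (e s) _ _
    have h3 : (fun ω => f (X (i + 1) ω)) = ∑ s ∈ Finset.range N,
        e s • fun ω => (B s).indicator (1 : β → ℝ) (X (i + 1) ω) := by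
      ext ω; simp [hf]
    unfold pastExp at h2 ⊢
    rw [h3]
    filter_upwards [h1, h2] with ω h1 h2
    rw [h1, Finset.sum_apply]
    exact Finset.sum_congr rfl fun s _ => h2 s
  refine le_trans (le_of_eq ?_) (integral_sq_pastExp_le hX hlaw hτ hfm hfb n)
  have hpe' := ae_all_iff.2 hpe
  refine integral_congr_ae ?_
  filter_upwards [hpe'] with ω hω
  simp only [zero_add, hfint, hω, Finset.mul_sum]
  rw [Finset.sum_comm]
  simp only [mul_sub, Finset.sum_sub_distrib]


end

/-! ### Exponential inequality and the maximal inequality over disjoint sets -/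

/-- The exponent `λ 1_B(X_{i+1}) - (e^λ - 1) P(X_{i+1} ∈ B | past up to i + 1 - q)`. -/
noncomputable def expIncr {β : Type*} [MeasurableSpace β] (P : Measure Ω) (X : ℤ → Ω → β) (q : ℕ)
    (B : Set β) (l : ℝ) (i : ℕ) (ω : Ω) : ℝ :=
  l * B.indicator 1 (X (i + 1) ω) - (Real.exp l - 1) * pastExp P X q (B.indicator 1) i ω

section
variable {β : Type*} [MeasurableSpace β] {P : Measure Ω} [IsProbabilityMeasure P]
  {X : ℤ → Ω → β} {q : ℕ}

lemma abs_indicator_one_le (B : Set β) (y : β) : |B.indicator (1 : β → ℝ) y| ≤ 1 := by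
  by_cases h : y ∈ B <;> simp [h]

lemma abs_expIncr_le (B : Set β) (l : ℝ) (i : ℕ) :
    ∀ᵐ ω ∂P, |expIncr P X q B l i ω| ≤ |l| + |Real.exp l - 1| := by
  filter_upwards [abs_pastExp_le (P := P) (X := X) (q := q) (abs_indicator_one_le B) i] with ω hω
  unfold expIncr
  refine (abs_sub _ _).trans ?_
  rw [abs_mul, abs_mul]
  have := abs_indicator_one_le B (X (i + 1) ω)
  have h1 := mul_le_mul_of_nonneg_left this (abs_nonneg l)
  have h2 := mul_le_mul_of_nonneg_left hω (abs_nonneg (Real.exp l - 1))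
  linarith

lemma stronglyMeasurable_expIncr {B : Set β} (hB : MeasurableSet B) (l : ℝ) (i : ℕ) {p : ℤ}
    (hp : (i : ℤ) + 1 ≤ p) : StronglyMeasurable[sigmaLE X p] (expIncr P X q B l i) := by
  have h1 : StronglyMeasurable[sigmaLE X p] (fun ω => B.indicator (1 : β → ℝ) (X (i + 1) ω)) :=
    ((measurable_one.indicator hB).comp (measurable_sigmaLE X hp)).stronglyMeasurable
  have h2 : StronglyMeasurable[sigmaLE X p] (pastExp P X q (B.indicator 1) i) :=
    (stronglyMeasurable_pastExp _ i).mono (sigmaLE_mono X (by omega))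
  exact (h1.const_mul l).sub (h2.const_mul _)

lemma integrable_exp_of_bdd {Y : Ω → ℝ} (hY : AEStronglyMeasurable Y P) {b : ℝ}
    (hb : ∀ᵐ ω ∂P, |Y ω| ≤ b) : Integrable (fun ω => Real.exp (Y ω)) P := by
  refine .of_bound (Real.continuous_exp.comp_aestronglyMeasurable hY) (Real.exp b) ?_
  filter_upwards [hb] with ω hω
  rw [Real.norm_eq_abs, abs_of_pos (Real.exp_pos _)]
  exact Real.exp_le_exp.2 ((le_abs_self _).trans hω)

lemma abs_sum_expIncr_le (B : Set β) (l : ℝ) (s : Finset ℕ) :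
    ∀ᵐ ω ∂P, |∑ i ∈ s, expIncr P X q B l i ω| ≤ s.card * (|l| + |Real.exp l - 1|) := by
  have := ae_all_iff.2 fun i => abs_expIncr_le (P := P) (X := X) (q := q) B l i
  filter_upwards [this] with ω hω
  refine (Finset.abs_sum_le_sum_abs _ _).trans ?_
  refine (Finset.sum_le_sum fun i _ => hω i).trans ?_
  rw [Finset.sum_const, nsmul_eq_mul]

lemma aestronglyMeasurable_sum_expIncr (hX : ∀ i, Measurable (X i)) {B : Set β}
    (hB : MeasurableSet B) (l : ℝ) (s : Finset ℕ) :
    AEStronglyMeasurable (fun ω => ∑ i ∈ s, expIncr P X q B l i ω) P :=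
  Finset.aestronglyMeasurable_fun_sum _ fun i _ =>
    ((stronglyMeasurable_expIncr hB l i le_rfl).mono (sigmaLE_le hX _)).aestronglyMeasurable

/-- Along one residue class modulo `q` the exponentials form a supermartingale, because
`E[e^{λ 1_B} | past] = 1 + (e^λ - 1) π ≤ e^{(e^λ - 1) π}`. -/
lemma integral_exp_residue_le (hX : ∀ i, Measurable (X i)) {B : Set β} (hB : MeasurableSet B)
    (l : ℝ) (r n : ℕ) :
    ∫ ω, Real.exp (∑ i ∈ (Finset.range n).filter (fun i => i % q = r), expIncr P X q B l i ω) ∂P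
      ≤ 1 := by
  induction n with
  | zero => simp
  | succ n ih =>
    rw [Finset.range_add_one, Finset.filter_insert]
    split_ifs with hr
    swap
    · exact ih
    set s := (Finset.range n).filter (fun i => i % q = r) with hs
    have hns : n ∉ s := by simp [hs]
    set p : ℤ := (n : ℤ) + 1 - q with hp
    have hsp : ∀ i ∈ s, (i : ℤ) + 1 ≤ p := by
      intro i hi
      simp only [hs, Finset.mem_filter, Finset.mem_range] at hi
      have hd : q ∣ n - i := (Nat.modEq_iff_dvd' hi.1.le).1 (hi.2.trans hr.symm)
      have := Nat.le_of_dvd (by omega) hd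
      omega
    set b := |l| + |Real.exp l - 1| with hb
    set e := Real.exp l - 1 with he
    set L : Ω → ℝ := fun ω => ∑ i ∈ s, expIncr P X q B l i ω with hL
    set π : Ω → ℝ := pastExp P X q (B.indicator 1) n with hπ
    set J : Ω → ℝ := fun ω => B.indicator (1 : β → ℝ) (X (n + 1) ω) with hJ
    have hLm : StronglyMeasurable[sigmaLE X p] L :=
      Finset.stronglyMeasurable_fun_sum _ fun i hi => stronglyMeasurable_expIncr hB l i (hsp i hi)
    have hπm : StronglyMeasurable[sigmaLE X p] π := stronglyMeasurable_pastExp _ n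
    set G : Ω → ℝ := fun ω => Real.exp (L ω - e * π ω) with hG
    have hGm : StronglyMeasurable[sigmaLE X p] G :=
      Real.continuous_exp.comp_stronglyMeasurable (hLm.sub (hπm.const_mul e))
    have hLb : ∀ᵐ ω ∂P, |L ω| ≤ s.card * b := abs_sum_expIncr_le B l s
    have hπb : ∀ᵐ ω ∂P, |π ω| ≤ 1 := abs_pastExp_le (abs_indicator_one_le B) n
    have hGb : ∀ᵐ ω ∂P, |G ω| ≤ Real.exp (s.card * b + |e|) := by
      filter_upwards [hLb, hπb] with ω h1 h2
      rw [abs_of_pos (Real.exp_pos _)]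
      refine Real.exp_le_exp.2 ((le_abs_self _).trans ((abs_sub _ _).trans ?_))
      rw [abs_mul]
      have := mul_le_mul_of_nonneg_left h2 (abs_nonneg e)
      linarith
    have hle := sigmaLE_le hX p
    have hGa : AEStronglyMeasurable G P := (hGm.mono hle).aestronglyMeasurable
    have hGi : Integrable G P := .of_bound hGa _ hGb
    have hJi : Integrable J P :=
      integrable_comp hX (measurable_one.indicator hB) (abs_indicator_one_le B) _
    have hπi : Integrable π P := integrable_condExp
    have hGJ : Integrable (fun ω => G ω * J ω) P := hJi.bdd_mul hGa hGb
    have hGπ : Integrable (fun ω => G ω * π ω) P := hπi.bdd_mul hGa hGb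
    have hpull : ∫ ω, G ω * π ω ∂P = ∫ ω, G ω * J ω ∂P := integral_mul_condExp hle hGm hGb hJi
    calc ∫ ω, Real.exp (∑ i ∈ insert n s, expIncr P X q B l i ω) ∂P
        = ∫ ω, (G ω + e * (G ω * J ω)) ∂P := by
          congr 1; ext ω
          rw [Finset.sum_insert hns]
          have : expIncr P X q B l n ω + ∑ i ∈ s, expIncr P X q B l i ω
              = (L ω - e * π ω) + l * J ω := by
            simp only [expIncr, hL, hJ, hπ, he]; ring
          rw [this, Real.exp_add]
          change G ω * _ = _
          by_cases h : X (n + 1) ω ∈ B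
          · simp [hJ, h, he]; ring
          · simp [hJ, h]
      _ = ∫ ω, (G ω + e * (G ω * π ω)) ∂P := by
          rw [integral_add hGi (hGJ.const_mul e), integral_add hGi (hGπ.const_mul e),
            integral_const_mul, integral_const_mul, hpull]
      _ ≤ ∫ ω, Real.exp (L ω) ∂P := by
          refine integral_mono (hGi.add (hGπ.const_mul e))
            (integrable_exp_of_bdd (hLm.mono hle).aestronglyMeasurable hLb) fun ω => ?_
          have h1 : Real.exp (L ω) = G ω * Real.exp (e * π ω) := by
            rw [hG, ← Real.exp_add]; congr 1; ring
          have h2 := Real.add_one_le_exp (e * π ω)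
          have h3 : 0 < G ω := Real.exp_pos _
          change G ω + e * (G ω * π ω) ≤ Real.exp (L ω)
          rw [h1]
          nlinarith
      _ ≤ 1 := ih

lemma integral_exp_sum_le (hX : ∀ i, Measurable (X i)) {B : Set β} (hB : MeasurableSet B)
    (hq : 1 ≤ q) (l : ℝ) (n : ℕ) :
    ∫ ω, Real.exp ((q : ℝ)⁻¹ * ∑ i ∈ Finset.range n, expIncr P X q B l i ω) ∂P ≤ 1 := by
  have hq0 : (0 : ℝ) < q := by exact_mod_cast hq
  set L : ℕ → Ω → ℝ := fun r ω =>
    ∑ i ∈ (Finset.range n).filter (fun i => i % q = r), expIncr P X q B l i ω with hL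
  have hLi : ∀ r, Integrable (fun ω => Real.exp (L r ω)) P := fun r =>
    integrable_exp_of_bdd (aestronglyMeasurable_sum_expIncr hX hB l _) (abs_sum_expIncr_le B l _)
  have hsum : ∀ ω, ∑ i ∈ Finset.range n, expIncr P X q B l i ω = ∑ r ∈ Finset.range q, L r ω :=
    fun ω => (Finset.sum_fiberwise_of_maps_to
      (fun i _ => Finset.mem_range.2 (Nat.mod_lt i hq)) _).symm
  calc ∫ ω, Real.exp ((q : ℝ)⁻¹ * ∑ i ∈ Finset.range n, expIncr P X q B l i ω) ∂P
      ≤ ∫ ω, ∑ r ∈ Finset.range q, (q : ℝ)⁻¹ * Real.exp (L r ω) ∂P := by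
        refine integral_mono_of_nonneg (ae_of_all _ fun _ => (Real.exp_pos _).le)
          (integrable_finsetSum _ fun r _ => (hLi r).const_mul _) (ae_of_all _ fun ω => ?_)
        -- convexity of the exponential lets the residue classes be treated separately
        have := convexOn_exp.map_sum_le (t := Finset.range q) (w := fun _ => (q : ℝ)⁻¹)
          (p := fun r => L r ω) (fun _ _ => by positivity)
          (by simp [hq0.ne']) (fun _ _ => mem_univ _)
        simpa [hsum, Finset.mul_sum] using this
    _ = ∑ r ∈ Finset.range q, (q : ℝ)⁻¹ * ∫ ω, Real.exp (L r ω) ∂P := by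
        rw [integral_finsetSum _ fun r _ => (hLi r).const_mul _]
        simp only [integral_const_mul]
    _ ≤ ∑ r ∈ Finset.range q, (q : ℝ)⁻¹ * 1 := by
        gcongr with r
        exact integral_exp_residue_le hX hB l r n
    _ = 1 := by simp [hq0.ne']

lemma measure_exp_tail_le (hX : ∀ i, Measurable (X i)) {B : Set β} (hB : MeasurableSet B)
    (hq : 1 ≤ q) (l t : ℝ) (n : ℕ) :
    P.real {ω | t ≤ (q : ℝ)⁻¹ * ∑ i ∈ Finset.range n, expIncr P X q B l i ω} ≤ Real.exp (-t) := by
  have h_integral : Integrable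
      (fun ω => Real.exp ((q : ℝ)⁻¹ * ∑ i ∈ Finset.range n, expIncr P X q B l i ω)) P := by
    refine integrable_exp_of_bdd ((aestronglyMeasurable_sum_expIncr hX hB l _).const_mul _)
      (b := |(q : ℝ)⁻¹| * ((Finset.range n).card * (|l| + |Real.exp l - 1|))) ?_
    filter_upwards [abs_sum_expIncr_le (P := P) (X := X) (q := q) B l (Finset.range n)] with ω hω
    rw [abs_mul]
    gcongr
  have h := mul_meas_ge_le_integral_of_nonneg (ae_of_all P fun _ => (Real.exp_pos _).le) h_integral
    (Real.exp t)
  have h2 := h.trans (integral_exp_sum_le hX hB hq l n)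
  simp only [Real.exp_le_exp] at h2
  rw [Real.exp_neg, inv_eq_one_div (Real.exp t), le_div_iff₀ (Real.exp_pos _), mul_comm]
  exact h2

lemma measure_abs_ge_le {T : Ω → ℝ} (hT : MemLp T 2 P) {c : ℝ} (hc : 0 < c) :
    P.real {ω | c ≤ |T ω|} ≤ (∫ ω, T ω ^ 2 ∂P) / c ^ 2 := by
  have h := mul_meas_ge_le_integral_of_nonneg (ae_of_all P fun ω => sq_nonneg (T ω))
    hT.integrable_sq (c ^ 2)
  rw [le_div_iff₀ (by positivity), mul_comm]
  refine le_trans (le_of_eq ?_) h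
  congr 2
  ext ω
  simp only [mem_setOf_eq]
  rw [← sq_abs (T ω)]
  exact (pow_le_pow_iff_left₀ hc.le (abs_nonneg _) two_ne_zero).symm

/-- Numerical step: if both exponential bounds hold and the predictable sum `V` is within
`(e/2) x` of its mean, then the hit count `S` is within `e x` of its mean. -/
lemma abs_sub_le_of_exp_bounds {e x l t S V m : ℝ} (he : 0 < e) (hx : 0 ≤ x)
    (hl : l = e / (4 + 2 * e)) (ht : t = l * e * x / 4) (hm : m ≤ x)
    (hV : |V - m| ≤ e / 2 * x)
    (h1 : l * S - (Real.exp l - 1) * V ≤ t)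
    (h2 : -l * S - (Real.exp (-l) - 1) * V ≤ t) : |S - m| ≤ e * x := by
  have hl0 : 0 < l := by rw [hl]; positivity
  have hl1 : l ≤ 1 := by rw [hl, div_le_one (by positivity)]; linarith
  have hle : l * (1 + e / 2) = e / 4 := by rw [hl]; field_simp; ring
  have hV' : V ≤ (1 + e / 2) * x := by have := (abs_le.1 hV).2; nlinarith
  have bound : ∀ y : ℝ, |y| = l → (Real.exp y - 1 - y) * V ≤ l * (e / 4 * x) := by
    intro y hy
    have a1 := Real.abs_exp_sub_one_sub_id_le (x := y) (hy ▸ hl1)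
    rw [← sq_abs y, hy] at a1
    have a2 : 0 ≤ Real.exp y - 1 - y := by have := Real.add_one_le_exp y; linarith
    rw [abs_of_nonneg a2] at a1
    have hpos : 0 ≤ (1 + e / 2) * x := by positivity
    calc (Real.exp y - 1 - y) * V ≤ (Real.exp y - 1 - y) * ((1 + e / 2) * x) := by gcongr
      _ ≤ l ^ 2 * ((1 + e / 2) * x) := by gcongr
      _ = l * ((l * (1 + e / 2)) * x) := by ring
      _ = l * (e / 4 * x) := by rw [hle]
  have b1 := bound l (abs_of_pos hl0)
  have b2 := bound (-l) (by rw [abs_neg, abs_of_pos hl0])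
  have c1 : l * (S - V) ≤ l * (e / 2 * x) := by nlinarith
  have c2 : l * (V - S) ≤ l * (e / 2 * x) := by nlinarith
  have d1 := le_of_mul_le_mul_left c1 hl0
  have d2 := le_of_mul_le_mul_left c2 hl0
  have := abs_le.1 hV
  rw [abs_le]
  constructor <;> linarith

lemma eventually_exp_small (A : ℕ) {c η : ℝ} (hc : 0 < c) (hη : 0 < η) :
    ∀ᶠ n : ℕ in atTop, 2 * (A * (n + 1) : ℝ) * Real.exp (-(c * √n)) ≤ η := by
  have h1 : Tendsto (fun n : ℕ => c * √(n : ℝ)) atTop atTop :=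
    (Real.tendsto_sqrt_atTop.comp tendsto_natCast_atTop_atTop).const_mul_atTop hc
  have h2 := (Real.tendsto_pow_mul_exp_neg_atTop_nhds_zero 2).comp h1
  have h3 := (Real.tendsto_pow_mul_exp_neg_atTop_nhds_zero 0).comp h1
  have h4 := (h2.const_mul (2 * A / c ^ 2)).add (h3.const_mul (2 * (A : ℝ)))
  simp only [mul_zero, add_zero] at h4
  filter_upwards [h4.eventually (ge_mem_nhds hη)] with n hn
  refine le_trans (le_of_eq ?_) hn
  simp only [Function.comp, mul_pow, Real.sq_sqrt (Nat.cast_nonneg n)]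
  field_simp

/-- Maximal inequality: for at most `A (n + 1)` pairwise disjoint sets of probability at most
`n^{-1/2}`, all centred hit counts are below `ε √n` with high probability. -/
theorem disjoint_family_bound (hX : ∀ i, Measurable (X i))
    (hlaw : ∀ i, P.map (X i) = P.map (X 1))
    (hτ : ∀ τ : ℝ, 0 < τ → ∃ q, 1 ≤ q ∧ ∀ N, ∑ k ∈ Finset.range N, alphaMix P X (k + q) ≤ τ)
    (A : ℕ) {ε η : ℝ} (hε : 0 < ε) (hη : 0 < η) :
    ∃ n₀ : ℕ, ∀ n ≥ n₀, ∀ N ≤ A * (n + 1), ∀ B : ℕ → Set β, (∀ s, MeasurableSet (B s)) →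
      (∀ s < N, ∀ t < N, s ≠ t → Disjoint (B s) (B t)) →
      (∀ s < N, n * P.real (X 1 ⁻¹' B s) ≤ √n) →
      P.real {ω | ∃ s < N, ε * √n <
        |∑ i ∈ Finset.range n, (B s).indicator 1 (X ((i : ℤ) + 1) ω)
          - n * P.real (X 1 ⁻¹' B s)|} ≤ η := by
  obtain ⟨q, hq, hqτ⟩ := hτ (η / 2 * (ε / 2) ^ 2 / 16) (by positivity)
  have hq0 : (0 : ℝ) < q := by exact_mod_cast hq
  set l := ε / (4 + 2 * ε) with hl
  have hl0 : 0 < l := by rw [hl]; positivity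
  set c := l * ε / 4 / q with hc
  have hc0 : 0 < c := by rw [hc]; positivity
  obtain ⟨n₀, hn₀⟩ := eventually_atTop.1
    ((eventually_exp_small A hc0 (half_pos hη)).and (eventually_ge_atTop 1))
  refine ⟨n₀, fun n hn N hN B hB hdisj hp => ?_⟩
  obtain ⟨hexp, hn1⟩ := hn₀ n hn
  have hn0 : (0 : ℝ) < n := by exact_mod_cast hn1
  have hsn : 0 < √(n : ℝ) := Real.sqrt_pos.2 hn0
  set T : ℕ → Ω → ℝ := fun s ω => ∑ i ∈ Finset.range n,
      (pastExp P X q ((B s).indicator 1) i ω - P.real (X 1 ⁻¹' B s)) with hT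
  set E1 : ℕ → Set Ω := fun s => {ω | ε / 2 * √n ≤ |T s ω|} with hE1
  set E2 : ℝ → ℕ → Set Ω := fun y s =>
    {ω | c * √n ≤ (q : ℝ)⁻¹ * ∑ i ∈ Finset.range n, expIncr P X q (B s) y i ω} with hE2
  have hsub : {ω | ∃ s < N, ε * √n < |∑ i ∈ Finset.range n, (B s).indicator 1 (X ((i : ℤ) + 1) ω)
      - n * P.real (X 1 ⁻¹' B s)|} ⊆
      ⋃ s ∈ Finset.range N, (E1 s ∪ (E2 l s ∪ E2 (-l) s)) := by
    rintro ω ⟨s, hs, hlt⟩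
    simp only [mem_iUnion, Finset.mem_range, exists_prop]
    refine ⟨s, hs, ?_⟩
    by_contra hnot
    simp only [hE1, hE2, mem_union, mem_setOf_eq, not_or, not_le] at hnot
    obtain ⟨g1, g2, g3⟩ := hnot
    have hsumV : T s ω = ∑ i ∈ Finset.range n, pastExp P X q ((B s).indicator 1) i ω
        - n * P.real (X 1 ⁻¹' B s) := by
      simp [hT, Finset.sum_sub_distrib]
    have conv : ∀ y : ℝ,
        (q : ℝ)⁻¹ * ∑ i ∈ Finset.range n, expIncr P X q (B s) y i ω < c * √n →
        y * ∑ i ∈ Finset.range n, (B s).indicator 1 (X ((i : ℤ) + 1) ω)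
          - (Real.exp y - 1) * ∑ i ∈ Finset.range n, pastExp P X q ((B s).indicator 1) i ω
          ≤ l * ε * √n / 4 := by
      intro y hy
      simp only [expIncr, Finset.sum_sub_distrib, ← Finset.mul_sum] at hy
      rw [inv_mul_lt_iff₀ hq0] at hy
      refine hy.le.trans (le_of_eq ?_)
      rw [hc]; field_simp
    rw [hsumV] at g1
    exact absurd (abs_sub_le_of_exp_bounds hε hsn.le hl rfl (hp s hs) g1.le (conv l g2)
      (conv (-l) g3)) (not_le.2 hlt)
  have hTL : ∀ s, MemLp (T s) 2 P := fun s =>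
    memLp_finsetSum _ fun i _ => memLp_pastExp_sub hX (abs_indicator_one_le _) i _
  have hE1b : ∑ s ∈ Finset.range N, P.real (E1 s) ≤ η / 2 := by
    have h1 := sum_integral_sq_pastExp_le hX hlaw hqτ N B hB hdisj n
    calc ∑ s ∈ Finset.range N, P.real (E1 s)
        ≤ ∑ s ∈ Finset.range N, (∫ ω, T s ω ^ 2 ∂P) / (ε / 2 * √n) ^ 2 :=
          Finset.sum_le_sum fun s _ => measure_abs_ge_le (hTL s) (by positivity)
      _ = (∑ s ∈ Finset.range N, ∫ ω, T s ω ^ 2 ∂P) / (ε / 2 * √n) ^ 2 := by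
          rw [Finset.sum_div]
      _ ≤ (16 * n * (η / 2 * (ε / 2) ^ 2 / 16)) / (ε / 2 * √n) ^ 2 := by gcongr
      _ = η / 2 := by
          rw [mul_pow, Real.sq_sqrt hn0.le]; field_simp
  have hE2b : ∑ s ∈ Finset.range N, (P.real (E2 l s) + P.real (E2 (-l) s)) ≤ η / 2 := by
    calc ∑ s ∈ Finset.range N, (P.real (E2 l s) + P.real (E2 (-l) s))
        ≤ ∑ s ∈ Finset.range N, (Real.exp (-(c * √n)) + Real.exp (-(c * √n))) :=
          Finset.sum_le_sum fun s _ => add_le_add (measure_exp_tail_le hX (hB s) hq _ _ n)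
            (measure_exp_tail_le hX (hB s) hq _ _ n)
      _ = 2 * (N : ℝ) * Real.exp (-(c * √n)) := by simp; ring
      _ ≤ 2 * (A * (n + 1) : ℝ) * Real.exp (-(c * √n)) := by
          gcongr; exact_mod_cast hN
      _ ≤ η / 2 := hexp
  calc P.real _ ≤ P.real (⋃ s ∈ Finset.range N, (E1 s ∪ (E2 l s ∪ E2 (-l) s))) :=
        measureReal_mono hsub (measure_ne_top _ _)
    _ ≤ ∑ s ∈ Finset.range N, P.real (E1 s ∪ (E2 l s ∪ E2 (-l) s)) :=
        measureReal_biUnion_finset_le _ _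
    _ ≤ ∑ s ∈ Finset.range N, (P.real (E1 s) + (P.real (E2 l s) + P.real (E2 (-l) s))) := by
        gcongr with s
        exact (measureReal_union_le _ _).trans (by gcongr; exact measureReal_union_le _ _)
    _ ≤ η := by rw [Finset.sum_add_distrib]; linarith

end

/-! ### Quantile chains of lower sets -/

/-- For a continuous distribution function `Φ` of a finite measure `μ`, the set `{Φ ≤ θ}` has
measure `θ`. -/
lemma measure_cdf_le (μ : Measure ℝ) [IsFiniteMeasure μ]
    (hΦ : Continuous fun x => μ.real (Iic x)) {θ : ℝ} (h0 : 0 ≤ θ) (h1 : θ ≤ μ.real univ) :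
    μ.real {x | μ.real (Iic x) ≤ θ} = θ := by
  set A := {x | μ.real (Iic x) ≤ θ} with hA
  have hclosed : IsClosed A := isClosed_le hΦ continuous_const
  have hmono : Monotone fun x => μ.real (Iic x) := fun x y hxy =>
    measureReal_mono (Iic_subset_Iic.2 hxy) (measure_ne_top _ _)
  have htop : Tendsto (fun x => μ.real (Iic x)) atTop (nhds (μ.real univ)) :=
    (ENNReal.tendsto_toReal (measure_ne_top _ _)).comp (tendsto_measure_Iic_atTop μ)
  have hbot : Tendsto (fun x => μ.real (Iic x)) atBot (nhds 0) := by
    have h := tendsto_measure_iInter_atBot (μ := μ) (s := fun x : ℝ => Iic x)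
      (fun x => measurableSet_Iic.nullMeasurableSet) (fun x y hxy => Iic_subset_Iic.2 hxy)
      ⟨0, measure_ne_top _ _⟩
    rw [iInter_Iic_eq_empty_iff.2 (by simp [not_bddBelow_univ]), measure_empty] at h
    have h2 := (ENNReal.tendsto_toReal ENNReal.zero_ne_top).comp h
    rw [ENNReal.toReal_zero] at h2
    exact h2
  by_cases hu : A = univ
  · rw [hu]
    refine le_antisymm (le_of_tendsto htop (Eventually.of_forall fun x => ?_)) h1
    exact (hu ▸ mem_univ x : x ∈ A)
  have hne : ∃ b, b ∉ A := by
    by_contra h; push Not at h; exact hu (eq_univ_of_forall h)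
  obtain ⟨b, hb⟩ := hne
  have hbA : ∀ x ∈ A, x ≤ b := by
    intro x hx
    by_contra h
    exact hb ((hmono (not_le.1 h).le).trans hx)
  by_cases he : A.Nonempty
  · have hbdd : BddAbove A := ⟨b, hbA⟩
    have hs : sSup A ∈ A := hclosed.csSup_mem he hbdd
    have hAeq : A = Iic (sSup A) := by
      ext x
      exact ⟨fun hx => le_csSup hbdd hx, fun hx => (hmono hx).trans hs⟩
    rw [hAeq]
    refine le_antisymm hs ?_
    have ht : Tendsto (fun x => μ.real (Iic x)) (nhdsWithin (sSup A) (Ioi (sSup A)))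
        (nhds (μ.real (Iic (sSup A)))) := (hΦ.tendsto _).mono_left nhdsWithin_le_nhds
    refine ge_of_tendsto ht ?_
    filter_upwards [self_mem_nhdsWithin] with x hx
    by_contra h
    exact absurd (le_csSup hbdd (show x ∈ A from (not_le.1 h).le)) (not_le.2 hx)
  · rw [not_nonempty_iff_eq_empty] at he
    rw [he]
    refine le_antisymm (by simpa using h0) ?_
    rw [measureReal_empty]
    refine ge_of_tendsto hbot (Eventually.of_forall fun x => ?_)
    by_contra h
    have : x ∈ A := (not_le.1 h).le
    rw [he] at this
    exact this

/-- An increasing chain of lower sets from `∅` to `ℝ` cutting `μ` into `N` pieces of equal mass. -/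
structure QuantileChain (μ : Measure ℝ) (N : ℕ) (L : ℕ → Set ℝ) : Prop where
  zero : L 0 = ∅
  top : L N = univ
  lower : ∀ c, IsLowerSet (L c)
  mono : Monotone L
  mass : ∀ c ≤ N, μ.real (L c) = c / N * μ.real univ

lemma exists_quantileChain (μ : Measure ℝ) [IsFiniteMeasure μ]
    (hΦ : Continuous fun x => μ.real (Iic x)) {N : ℕ} (hN : 1 ≤ N) :
    ∃ L, QuantileChain μ N L := by
  have hN0 : (0 : ℝ) < N := by exact_mod_cast hN
  have hm : 0 ≤ μ.real univ := measureReal_nonneg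
  have hmono : Monotone fun x => μ.real (Iic x) := fun x y hxy =>
    measureReal_mono (Iic_subset_Iic.2 hxy) (measure_ne_top _ _)
  refine ⟨fun c => if c = 0 then ∅ else if N ≤ c then univ else
    {x | μ.real (Iic x) ≤ c / N * μ.real univ}, ?_, ?_, ?_, ?_, ?_⟩
  · simp
  · have : N ≠ 0 := by omega
    simp [this]
  · intro c
    split_ifs
    · exact isLowerSet_empty
    · exact isLowerSet_univ
    · exact fun x y hxy hx => (hmono hxy).trans hx
  · intro c c' hcc
    dsimp only
    split_ifs with h1 h2 h3 h4 h5 h6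
    all_goals first | exact empty_subset _ | exact subset_univ _ | omega | skip
    intro x hx
    refine le_trans (show μ.real (Iic x) ≤ _ from hx) ?_
    gcongr
  · intro c hc
    split_ifs with h1 h2
    · simp [h1]
    · have : c = N := le_antisymm hc h2
      subst this
      field_simp
    · refine measure_cdf_le μ hΦ (by positivity) ?_
      have : (c : ℝ) / N ≤ 1 := by rw [div_le_one hN0]; exact_mod_cast hc
      nlinarith

lemma measurableSet_of_isLowerSet {D : Set ℝ} (hD : IsLowerSet D) : MeasurableSet D :=
  hD.ordConnected.measurableSet

/-- The last index below `N` whose chain element is contained in `D`. -/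
noncomputable def chainIdx (L : ℕ → Set ℝ) (N : ℕ) (D : Set ℝ) : ℕ :=
  @Nat.findGreatest (fun c => L c ⊆ D) (Classical.decPred _) (N - 1)

namespace QuantileChain
variable {μ : Measure ℝ} {N : ℕ} {L : ℕ → Set ℝ}

lemma idx_lt (hN : 1 ≤ N) (D : Set ℝ) : chainIdx L N D < N :=
  lt_of_le_of_lt (@Nat.findGreatest_le _ (Classical.decPred _) _) (by omega)

lemma idx_mono {D D' : Set ℝ} (h : D ⊆ D') : chainIdx L N D ≤ chainIdx L N D' := by
  exact @Nat.findGreatest_mono_left _ _ (Classical.decPred _) (Classical.decPred _) (fun c hc => hc.trans h) _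

lemma subset_idx (hL : QuantileChain μ N L) (D : Set ℝ) : L (chainIdx L N D) ⊆ D := by
  let _ : DecidablePred fun c => L c ⊆ D := Classical.decPred _
  exact Nat.findGreatest_spec (P := fun c => L c ⊆ D) (Nat.zero_le _) (by simp [hL.zero])

lemma idx_subset (hL : QuantileChain μ N L) (hN : 1 ≤ N) {D : Set ℝ} (hD : IsLowerSet D) :
    D ⊆ L (chainIdx L N D + 1) := by
  let _ : DecidablePred fun c => L c ⊆ D := Classical.decPred _
  rcases Nat.lt_or_ge (chainIdx L N D) (N - 1) with h | h
  · have hnot : ¬ L (chainIdx L N D + 1) ⊆ D :=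
      Nat.findGreatest_is_greatest (P := fun c => L c ⊆ D) (n := N - 1) (Nat.lt_succ_self _) h
    exact (hD.total (hL.lower _)).resolve_right hnot
  · have h2 := idx_lt (L := L) hN D
    have : chainIdx L N D + 1 = N := by omega
    rw [this, hL.top]
    exact subset_univ _

/-- The mass of each piece of the chain. -/
lemma mass_piece [IsFiniteMeasure μ] (hL : QuantileChain μ N L) {l : ℕ} (hl : l < N) :
    μ.real (L (l + 1) \ L l) = μ.real univ / N := by
  have hN0 : (0 : ℝ) < N := by exact_mod_cast (by omega : 0 < N)
  rw [measureReal_sdiff (hL.mono (Nat.le_succ l)) (measurableSet_of_isLowerSet (hL.lower l)),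
    hL.mass _ hl, hL.mass _ hl.le]
  push_cast
  field_simp
  ring

lemma sum_piece (hL : QuantileChain μ N L) (m : Measure ℝ) [IsFiniteMeasure m] {a b : ℕ}
    (hab : a ≤ b) : ∑ l ∈ Finset.Ico a b, m.real (L (l + 1) \ L l) = m.real (L b \ L a) := by
  have h1 : ∀ l, m.real (L (l + 1) \ L l) = m.real (L (l + 1)) - m.real (L l) := fun l =>
    measureReal_sdiff (hL.mono (Nat.le_succ l)) (measurableSet_of_isLowerSet (hL.lower l))
  simp only [h1]
  rw [Finset.sum_Ico_sub (fun l => m.real (L l)) hab,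
    measureReal_sdiff (hL.mono hab) (measurableSet_of_isLowerSet (hL.lower a))]

lemma sum_inner_le (hL : QuantileChain μ N L) (hN : 1 ≤ N) (m : Measure ℝ) [IsFiniteMeasure m]
    {D D' : Set ℝ} (hD : IsLowerSet D) :
    ∑ l ∈ Finset.Ico (chainIdx L N D + 1) (chainIdx L N D'), m.real (L (l + 1) \ L l)
      ≤ m.real (D' \ D) := by
  rcases le_total (chainIdx L N D + 1) (chainIdx L N D') with h | h
  · rw [hL.sum_piece m h]
    exact measureReal_mono (sdiff_subset_sdiff (hL.subset_idx D') (hL.idx_subset hN hD))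
      (measure_ne_top _ _)
  · rw [Finset.Ico_eq_empty_of_le h]
    simp

lemma le_sum_outer (hL : QuantileChain μ N L) (hN : 1 ≤ N) (m : Measure ℝ) [IsFiniteMeasure m]
    {D D' : Set ℝ} (hD' : IsLowerSet D') (hDD : D ⊆ D') :
    m.real (D' \ D)
      ≤ ∑ l ∈ Finset.Ico (chainIdx L N D) (chainIdx L N D' + 1), m.real (L (l + 1) \ L l) := by
  rw [hL.sum_piece m ((idx_mono hDD).trans (Nat.le_succ _))]
  exact measureReal_mono (sdiff_subset_sdiff (hL.idx_subset hN hD') (hL.subset_idx D))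
    (measure_ne_top _ _)

lemma sum_outer_le_inner {a b : ℕ} (hab : a ≤ b) {f : ℕ → ℝ} {t : ℝ} (hf : ∀ l, 0 ≤ f l)
    (ha : f a ≤ t) (hb : f b ≤ t) :
    ∑ l ∈ Finset.Ico a (b + 1), f l ≤ ∑ l ∈ Finset.Ico (a + 1) b, f l + 2 * t := by
  rw [Finset.sum_Ico_succ_top hab]
  rcases hab.eq_or_lt with h | h
  · subst h; simp; linarith [hf a]
  · rw [Finset.sum_eq_sum_Ico_succ_bot h]; linarith

/-- Two measures that agree up to `e` on each piece of the chain agree, up to the number of pieces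
involved times `e` and the mass of two pieces, on differences of lower sets. -/
lemma abs_sub_le (hL : QuantileChain μ N L) (hN : 1 ≤ N) (m m' : Measure ℝ) [IsFiniteMeasure m]
    [IsFiniteMeasure m'] {e t : ℝ} (he : 0 ≤ e)
    (h : ∀ l < N, |m.real (L (l + 1) \ L l) - m'.real (L (l + 1) \ L l)| ≤ e)
    (ht : ∀ l < N, m'.real (L (l + 1) \ L l) ≤ t)
    {D D' : Set ℝ} (hD : IsLowerSet D) (hD' : IsLowerSet D') (hDD : D ⊆ D') :
    |m.real (D' \ D) - m'.real (D' \ D)|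
      ≤ (chainIdx L N D' - chainIdx L N D + 1) * e + 2 * t := by
  have hidx := idx_mono (L := L) (N := N) hDD
  have hidx' : (chainIdx L N D : ℝ) ≤ chainIdx L N D' := by exact_mod_cast hidx
  have hlt := idx_lt (L := L) hN D'
  have hlt0 := idx_lt (L := L) hN D
  have o1 := hL.le_sum_outer hN m hD' hDD
  have o2 := hL.le_sum_outer hN m' hD' hDD
  have i1 := hL.sum_inner_le hN m hD (D' := D')
  have i2 := hL.sum_inner_le hN m' hD (D' := D')
  have s2 := sum_outer_le_inner hidx (f := fun l => m'.real (L (l + 1) \ L l)) (t := t)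
    (fun _ => measureReal_nonneg) (ht _ hlt0) (ht _ hlt)
  have c1 : ∑ l ∈ Finset.Ico (chainIdx L N D) (chainIdx L N D' + 1), m.real (L (l + 1) \ L l)
      ≤ ∑ l ∈ Finset.Ico (chainIdx L N D) (chainIdx L N D' + 1), m'.real (L (l + 1) \ L l)
        + (chainIdx L N D' - chainIdx L N D + 1) * e := by
    have : ∑ l ∈ Finset.Ico (chainIdx L N D) (chainIdx L N D' + 1), m.real (L (l + 1) \ L l)
      ≤ ∑ l ∈ Finset.Ico (chainIdx L N D) (chainIdx L N D' + 1),
          (m'.real (L (l + 1) \ L l) + e) := by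
      refine Finset.sum_le_sum fun l hl => ?_
      have := (abs_le.1 (h l (by have := (Finset.mem_Ico.1 hl).2; omega))).2
      linarith
    refine this.trans (le_of_eq ?_)
    rw [Finset.sum_add_distrib, Finset.sum_const, Nat.card_Ico, nsmul_eq_mul,
      Nat.cast_sub (by omega)]
    push_cast; ring
  have c2 : ∑ l ∈ Finset.Ico (chainIdx L N D + 1) (chainIdx L N D'), m'.real (L (l + 1) \ L l)
      ≤ ∑ l ∈ Finset.Ico (chainIdx L N D + 1) (chainIdx L N D'), m.real (L (l + 1) \ L l)
        + (chainIdx L N D' - chainIdx L N D + 1) * e := by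
    have : ∑ l ∈ Finset.Ico (chainIdx L N D + 1) (chainIdx L N D'), m'.real (L (l + 1) \ L l)
      ≤ ∑ l ∈ Finset.Ico (chainIdx L N D + 1) (chainIdx L N D'),
          (m.real (L (l + 1) \ L l) + e) := by
      refine Finset.sum_le_sum fun l hl => ?_
      have := (abs_le.1 (h l (by have := (Finset.mem_Ico.1 hl).2; omega))).1
      linarith
    refine this.trans ?_
    rw [Finset.sum_add_distrib, Finset.sum_const, Nat.card_Ico, nsmul_eq_mul]
    gcongr
    have : chainIdx L N D' - (chainIdx L N D + 1) ≤ chainIdx L N D' - chainIdx L N D := by omega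
    have h3 : ((chainIdx L N D' - (chainIdx L N D + 1) : ℕ) : ℝ)
        ≤ ((chainIdx L N D' - chainIdx L N D : ℕ) : ℝ) := by exact_mod_cast this
    rw [Nat.cast_sub hidx] at h3
    linarith
  rw [abs_le]
  constructor <;> linarith

/-- A difference of lower sets of `m`-mass at most `s` meets few pieces, when `m` charges every
piece. -/
lemma idx_sub_le (hL : QuantileChain μ N L) (hN : 1 ≤ N) (m : Measure ℝ) [IsFiniteMeasure m]
    {t s : ℝ} (ht : ∀ l < N, t ≤ m.real (L (l + 1) \ L l)) (ht0 : 0 < t)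
    {D D' : Set ℝ} (hD : IsLowerSet D) (hs : m.real (D' \ D) ≤ s) :
    (chainIdx L N D' : ℝ) - chainIdx L N D ≤ 1 + s / t := by
  have hlt := idx_lt (L := L) hN D'
  have i1 := (hL.sum_inner_le hN m hD (D' := D')).trans hs
  have h2 : ∑ l ∈ Finset.Ico (chainIdx L N D + 1) (chainIdx L N D'), t ≤ s := by
    refine (Finset.sum_le_sum fun l hl => ht l ?_).trans i1
    have := (Finset.mem_Ico.1 hl).2; omega
  rw [Finset.sum_const, Nat.card_Ico, nsmul_eq_mul, ← le_div_iff₀ ht0] at h2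
  have h3 : (chainIdx L N D' : ℝ) ≤ ((chainIdx L N D' - (chainIdx L N D + 1) : ℕ) : ℝ)
      + (chainIdx L N D + 1) := by
    have : chainIdx L N D' ≤ (chainIdx L N D' - (chainIdx L N D + 1)) + (chainIdx L N D + 1) := by
      omega
    exact_mod_cast this
  linarith

end QuantileChain


/-! ### Comparison of two measures on slabs -/

/-- The points whose `j`-th coordinate lies in `E` and whose other coordinates `k` lie in `D k`. -/
def slab (j : Fin d) (D : Fin d → Set ℝ) (E : Set ℝ) : Set (Fin d → ℝ) :=
  {y | y j ∈ E ∧ ∀ k, k ≠ j → y k ∈ D k}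

lemma measurableSet_side (j : Fin d) {D : Fin d → Set ℝ} (hD : ∀ k, MeasurableSet (D k)) :
    MeasurableSet {y : Fin d → ℝ | ∀ k, k ≠ j → y k ∈ D k} := by
  simp only [ofPred_forall]
  exact MeasurableSet.iInter fun k => MeasurableSet.iInter fun _ => measurable_pi_apply k (hD k)

lemma measurableSet_slab (j : Fin d) {D : Fin d → Set ℝ} (hD : ∀ k, MeasurableSet (D k))
    {E : Set ℝ} (hE : MeasurableSet E) : MeasurableSet (slab j D E) :=
  (measurable_pi_apply j hE).inter (measurableSet_side j hD)

lemma slab_mono (j : Fin d) {D D' : Fin d → Set ℝ} (h : ∀ k, D k ⊆ D' k) {E E' : Set ℝ}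
    (hE : E ⊆ E') : slab j D E ⊆ slab j D' E' :=
  fun _ hy => ⟨hE hy.1, fun k hk => h k (hy.2 k hk)⟩

/-- The measure `E ↦ μ (slab j D E)` on the line. -/
noncomputable def slabMeas (μ : Measure (Fin d → ℝ)) (j : Fin d) (D : Fin d → Set ℝ) :
    Measure ℝ :=
  (μ.restrict {y | ∀ k, k ≠ j → y k ∈ D k}).map fun y => y j

instance (μ : Measure (Fin d → ℝ)) [IsFiniteMeasure μ] (j : Fin d) (D : Fin d → Set ℝ) :
    IsFiniteMeasure (slabMeas μ j D) := by
  unfold slabMeas; infer_instance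

lemma slabMeas_real (μ : Measure (Fin d → ℝ)) (j : Fin d) {D : Fin d → Set ℝ} {E : Set ℝ}
    (hE : MeasurableSet E) : (slabMeas μ j D).real E = μ.real (slab j D E) := by
  rw [slabMeas, map_measureReal_apply (measurable_pi_apply j) hE,
    measureReal_restrict_apply (measurable_pi_apply j hE)]
  rfl

/-- Inside a strip `{y j ∈ S}`, the slab over arbitrary lower sets is bracketed between two slabs
over quantile chains, whose masses differ by at most `d / K` times the mass of the strip. -/
lemma strip_bracket (γ ν : Measure (Fin d → ℝ)) [IsFiniteMeasure γ] [IsFiniteMeasure ν]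
    (j : Fin d) {S : Set ℝ} (hS : MeasurableSet S) {K : ℕ} (hK : 1 ≤ K) {M : Fin d → ℕ → Set ℝ}
    (hM : ∀ k, QuantileChain ((ν.restrict {y | y j ∈ S}).map fun y => y k) K (M k)) {e : ℝ}
    (h : ∀ c : Fin d → ℕ, (∀ k, c k ≤ K) →
      |γ.real (slab j (fun k => M k (c k)) S) - ν.real (slab j (fun k => M k (c k)) S)| ≤ e)
    {D : Fin d → Set ℝ} (hD : ∀ k, IsLowerSet (D k)) :
    |γ.real (slab j D S) - ν.real (slab j D S)| ≤ e + d * (ν.real {y | y j ∈ S} / K) := by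
  set c : Fin d → ℕ := fun k => chainIdx (M k) K (D k) with hc
  have hcK : ∀ k, c k < K := fun k => QuantileChain.idx_lt hK (D k)
  have h1 := h c fun k => (hcK k).le
  have h2 := h (fun k => c k + 1) fun k => hcK k
  set I := slab j (fun k => M k (c k)) S
  set O := slab j (fun k => M k (c k + 1)) S
  have hI : I ⊆ slab j D S := slab_mono j (fun k => (hM k).subset_idx (D k)) subset_rfl
  have hO : slab j D S ⊆ O := slab_mono j (fun k => (hM k).idx_subset hK (hD k)) subset_rfl
  have hIm : MeasurableSet I :=
    measurableSet_slab j (fun k => measurableSet_of_isLowerSet ((hM k).lower _)) hS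
  have hstrip : MeasurableSet {y : Fin d → ℝ | y j ∈ S} := measurable_pi_apply j hS
  have hdiff : ν.real O - ν.real I ≤ d * (ν.real {y | y j ∈ S} / K) := by
    rw [← measureReal_sdiff (hI.trans hO) hIm]
    have hsub : O \ I ⊆ ⋃ k ∈ (Finset.univ : Finset (Fin d)),
        {y : Fin d → ℝ | y k ∈ M k (c k + 1) \ M k (c k)} ∩ {y | y j ∈ S} := by
      rintro y ⟨hy, hy'⟩
      have : ∃ k, k ≠ j ∧ y k ∉ M k (c k) := by
        by_contra hcon
        push Not at hcon
        exact hy' ⟨hy.1, hcon⟩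
      obtain ⟨k, hk, hyk⟩ := this
      simp only [mem_iUnion]
      exact ⟨k, Finset.mem_univ k, ⟨hy.2 k hk, hyk⟩, hy.1⟩
    refine (measureReal_mono hsub (measure_ne_top _ _)).trans
      ((measureReal_biUnion_finset_le _ _).trans ?_)
    have : ∀ k ∈ (Finset.univ : Finset (Fin d)),
        ν.real ({y : Fin d → ℝ | y k ∈ M k (c k + 1) \ M k (c k)} ∩ {y | y j ∈ S})
          = ν.real {y | y j ∈ S} / K := by
      intro k _
      have hp := (hM k).mass_piece (hcK k)
      have hm : MeasurableSet (M k (c k + 1) \ M k (c k)) :=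
        (measurableSet_of_isLowerSet ((hM k).lower _)).diff
          (measurableSet_of_isLowerSet ((hM k).lower _))
      rw [map_measureReal_apply (measurable_pi_apply k) hm,
        map_measureReal_apply (measurable_pi_apply k) MeasurableSet.univ,
        measureReal_restrict_apply (measurable_pi_apply k hm)] at hp
      have h3 : (ν.restrict {y | y j ∈ S}).real univ = ν.real {y | y j ∈ S} := by
        simp
      rw [preimage_univ, h3] at hp
      exact hp
    rw [Finset.sum_congr rfl this]
    simp
  have a1 := measureReal_mono hI (measure_ne_top γ _)
  have a2 := measureReal_mono hO (measure_ne_top γ _)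
  have a3 := measureReal_mono hI (measure_ne_top ν _)
  have a4 := measureReal_mono hO (measure_ne_top ν _)
  rw [abs_le] at h1 h2 ⊢
  constructor <;> linarith [h1.1, h1.2, h2.1, h2.2]

/-- The event on which `γ` is uniformly `ε`-close to `ν` on half-spaces, and `ε h`-close to `ν` on
all slabs of `γ`-thickness at most `3 h`. -/
structure GoodOsc (γ ν : Measure (Fin d → ℝ)) (ε h : ℝ) : Prop where
  half : ∀ (j : Fin d) (E : Set ℝ), IsLowerSet E →
    |γ.real {y | y j ∈ E} - ν.real {y | y j ∈ E}| ≤ ε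
  thin : ∀ (j : Fin d) (D : Fin d → Set ℝ) (E E' : Set ℝ), (∀ k, IsLowerSet (D k)) →
    IsLowerSet E → IsLowerSet E' → E ⊆ E' → γ.real {y | y j ∈ E' \ E} ≤ 3 * h →
    |γ.real (slab j D (E' \ E)) - ν.real (slab j D (E' \ E))| ≤ ε * h

lemma slab_univ (j : Fin d) (E : Set ℝ) : slab j (fun _ => univ) E = {y | y j ∈ E} := by
  ext y; simp [slab]

/-- Control of all strips of a chain of `N ≈ A / h` strips yields control of half-spaces and thin
slabs. -/
lemma goodOsc_of_strips (γ ν : Measure (Fin d → ℝ)) [IsFiniteMeasure γ] [IsProbabilityMeasure ν]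
    {N : ℕ} (hN : 1 ≤ N) {L : Fin d → ℕ → Set ℝ}
    (hL : ∀ j, QuantileChain (ν.map fun y => y j) N (L j)) {A e h ε : ℝ} (hA : 0 < A) (he : 0 < e)
    (hh : 0 < h) (hh1 : h ≤ 1) (hN1 : A ≤ N * h) (hN2 : N * h ≤ 2 * A) (he1 : 4 * A * e ≤ 1)
    (hε1 : 4 ≤ ε * A) (hε2 : 2 * (2 + 12 * A) * e ≤ ε)
    (hst : ∀ j, ∀ l < N, ∀ D : Fin d → Set ℝ, (∀ k, IsLowerSet (D k)) →
      |γ.real (slab j D (L j (l + 1) \ L j l)) - ν.real (slab j D (L j (l + 1) \ L j l))|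
        ≤ e * h) :
    GoodOsc γ ν ε h := by
  have hN0 : (0 : ℝ) < N := by exact_mod_cast hN
  have hpm : ∀ j l, MeasurableSet (L j (l + 1) \ L j l) := fun j l =>
    (measurableSet_of_isLowerSet ((hL j).lower _)).diff
      (measurableSet_of_isLowerSet ((hL j).lower _))
  have hpiece : ∀ j, ∀ l < N, ν.real {y | y j ∈ L j (l + 1) \ L j l} = 1 / N := by
    intro j l hl
    have hp := (hL j).mass_piece hl
    rw [map_measureReal_apply (measurable_pi_apply j) (hpm j l),
      map_measureReal_apply (measurable_pi_apply j) MeasurableSet.univ] at hp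
    rw [preimage_univ, probReal_univ] at hp
    exact hp
  have hNinv : 1 / (N : ℝ) ≤ h / A := by
    rw [div_le_div_iff₀ hN0 hA]; linarith
  have hA4 : 2 * (h / A) ≤ ε * h / 2 := by
    have : 1 / A ≤ ε / 4 := by rw [div_le_div_iff₀ hA (by norm_num)]; linarith
    calc 2 * (h / A) = 2 * h * (1 / A) := by ring
      _ ≤ 2 * h * (ε / 4) := by gcongr
      _ = ε * h / 2 := by ring
  -- The general comparison, from which both claims follow by bounding the number of strips.
  have key : ∀ (j : Fin d) (D : Fin d → Set ℝ) (E E' : Set ℝ), (∀ k, IsLowerSet (D k)) →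
      IsLowerSet E → IsLowerSet E' → E ⊆ E' →
      |γ.real (slab j D (E' \ E)) - ν.real (slab j D (E' \ E))|
        ≤ (chainIdx (L j) N E' - chainIdx (L j) N E + 1) * (e * h) + 2 * (1 / N) := by
    intro j D E E' hD hE hE' hEE
    have hm : MeasurableSet (E' \ E) :=
      (measurableSet_of_isLowerSet hE').diff (measurableSet_of_isLowerSet hE)
    have := (hL j).abs_sub_le hN (slabMeas γ j D) (slabMeas ν j D) (e := e * h) (t := 1 / N)
      (by positivity)
      (fun l hl => by
        rw [slabMeas_real _ _ (hpm j l), slabMeas_real _ _ (hpm j l)]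
        exact hst j l hl D hD)
      (fun l hl => by
        rw [slabMeas_real _ _ (hpm j l), ← hpiece j l hl, ← slab_univ]
        exact measureReal_mono (slab_mono j (fun k => subset_univ _) subset_rfl)
          (measure_ne_top _ _)) hE hE' hEE
    rwa [slabMeas_real _ _ hm, slabMeas_real _ _ hm] at this
  refine ⟨?_, ?_⟩
  · intro j E hE
    have h1 := key j (fun _ => univ) ∅ E (fun _ => isLowerSet_univ) isLowerSet_empty hE
      (empty_subset _)
    rw [sdiff_empty, slab_univ] at h1
    refine h1.trans ?_
    have hlt : (chainIdx (L j) N E : ℝ) + 1 ≤ N := by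
      exact_mod_cast QuantileChain.idx_lt (L := L j) hN E
    have h0 : (0 : ℝ) ≤ chainIdx (L j) N ∅ := by positivity
    have h2 : (chainIdx (L j) N E - chainIdx (L j) N ∅ + 1) * (e * h) ≤ 2 * A * e := by
      calc (chainIdx (L j) N E - chainIdx (L j) N ∅ + 1) * (e * h) ≤ N * (e * h) := by
            gcongr; linarith
        _ = N * h * e := by ring
        _ ≤ _ := by gcongr
    have : 0 < ε := by nlinarith
    nlinarith
  · intro j D E E' hD hE hE' hEE hs
    have h1 := key j D E E' hD hE hE' hEE
    have hm : MeasurableSet (E' \ E) :=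
      (measurableSet_of_isLowerSet hE').diff (measurableSet_of_isLowerSet hE)
    have hidx := (hL j).idx_sub_le hN (slabMeas γ j fun _ => univ) (t := 1 / (2 * N)) (s := 3 * h)
      (fun l hl => by
        rw [slabMeas_real _ _ (hpm j l)]
        have h2 := (abs_le.1 (hst j l hl (fun _ => univ) fun _ => isLowerSet_univ)).1
        rw [slab_univ] at h2 ⊢
        rw [hpiece j l hl] at h2
        have : e * h ≤ 1 / (2 * N) := by
          rw [le_div_iff₀ (by positivity)]
          nlinarith
        have h3 : 1 / (N : ℝ) = 1 / (2 * N) + 1 / (2 * N) := by field_simp; norm_num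
        linarith) (by positivity) hE (D' := E')
      (by rw [slabMeas_real _ _ hm, slab_univ]; exact hs)
    have h3 : 3 * h / (1 / (2 * (N : ℝ))) = 6 * (N * h) := by field_simp; norm_num
    rw [h3] at hidx
    refine h1.trans ?_
    have h4 : (chainIdx (L j) N E' - chainIdx (L j) N E + 1) * (e * h)
        ≤ (2 + 12 * A) * (e * h) :=
      mul_le_mul_of_nonneg_right (by linarith) (by positivity)
    have h5 : (2 + 12 * A) * (e * h) ≤ ε * h / 2 := by nlinarith
    linarith

/-! ### The good event has probability tending to one -/

/-- The empirical measure of `X 1 ω, …, X n ω`. -/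
noncomputable def empMeas (X : ℤ → Ω → Fin d → ℝ) (n : ℕ) (ω : Ω) : Measure (Fin d → ℝ) :=
  ((n : NNReal)⁻¹) • ∑ i ∈ Finset.range n, Measure.dirac (X ((i : ℤ) + 1) ω)

instance (X : ℤ → Ω → Fin d → ℝ) (n : ℕ) (ω : Ω) : IsFiniteMeasure (empMeas X n ω) := by
  unfold empMeas; infer_instance

lemma empMeas_real (X : ℤ → Ω → Fin d → ℝ) (n : ℕ) (ω : Ω) {Q : Set (Fin d → ℝ)}
    (hQ : MeasurableSet Q) : (empMeas X n ω).real Q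
      = (n : ℝ)⁻¹ * ∑ i ∈ Finset.range n, Q.indicator 1 (X ((i : ℤ) + 1) ω) := by
  have h : (∑ i ∈ Finset.range n, Measure.dirac (X ((i : ℤ) + 1) ω)).real Q
      = ∑ i ∈ Finset.range n, Q.indicator (1 : (Fin d → ℝ) → ℝ) (X ((i : ℤ) + 1) ω) := by
    rw [measureReal_def, Measure.finsetSum_apply, ENNReal.toReal_sum]
    · refine Finset.sum_congr rfl fun i _ => ?_
      rw [Measure.dirac_apply' _ hQ]
      by_cases hx : X ((i : ℤ) + 1) ω ∈ Q <;> simp [hx]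
    · intro i _
      exact measure_ne_top _ _
  rw [empMeas, measureReal_nnreal_smul_apply, h]
  simp

/-- Continuity of the margins is inherited by restrictions. -/
lemma continuous_restrict_cdf (ν : Measure (Fin d → ℝ)) [IsFiniteMeasure ν] (k : Fin d)
    (hF : Continuous fun x => ν.real {y | y k ≤ x}) (T : Set (Fin d → ℝ)) :
    Continuous fun x => ((ν.restrict T).map fun y => y k).real (Iic x) := by
  have hval : ∀ x, ((ν.restrict T).map fun y => y k).real (Iic x)
      = ν.real ({y | y k ≤ x} ∩ T) := by
    intro x
    rw [map_measureReal_apply (measurable_pi_apply k) measurableSet_Iic,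
      measureReal_restrict_apply (measurable_pi_apply k measurableSet_Iic)]
    rfl
  have hdom : ∀ x y, x ≤ y → ν.real ({z | z k ≤ y} ∩ T) - ν.real ({z | z k ≤ x} ∩ T)
      ≤ ν.real {z | z k ≤ y} - ν.real {z | z k ≤ x} := by
    intro x y hxy
    have hsub : {z : Fin d → ℝ | z k ≤ x} ⊆ {z | z k ≤ y} := fun z hz => le_trans hz hxy
    have hm : MeasurableSet {z : Fin d → ℝ | z k ≤ x} := measurable_pi_apply k measurableSet_Iic
    rw [← measureReal_sdiff hsub hm]
    have : {z : Fin d → ℝ | z k ≤ y} ∩ T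
        ⊆ ({z | z k ≤ x} ∩ T) ∪ ({z | z k ≤ y} \ {z | z k ≤ x}) := by
      intro z hz
      by_cases hzx : z k ≤ x
      · exact Or.inl ⟨hzx, hz.2⟩
      · exact Or.inr ⟨hz.1, hzx⟩
    have := (measureReal_mono this (measure_ne_top ν _)).trans (measureReal_union_le _ _)
    linarith
  have habs : ∀ x y, |ν.real ({z | z k ≤ y} ∩ T) - ν.real ({z | z k ≤ x} ∩ T)|
      ≤ |ν.real {z | z k ≤ y} - ν.real {z | z k ≤ x}| := by
    have hle : ∀ x y, x ≤ y → |ν.real ({z | z k ≤ y} ∩ T) - ν.real ({z | z k ≤ x} ∩ T)|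
        ≤ |ν.real {z | z k ≤ y} - ν.real {z | z k ≤ x}| := by
      intro x y hxy
      have h0 : ν.real ({z | z k ≤ x} ∩ T) ≤ ν.real ({z | z k ≤ y} ∩ T) :=
        measureReal_mono (inter_subset_inter_left _ fun z hz => le_trans hz hxy)
          (measure_ne_top _ _)
      rw [abs_of_nonneg (by linarith)]
      exact (hdom x y hxy).trans (le_abs_self _)
    intro x y
    rcases le_total x y with hxy | hxy
    · exact hle x y hxy
    · rw [abs_sub_comm, abs_sub_comm (ν.real {z | z k ≤ y})]
      exact hle y x hxy
  simp only [hval]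
  rw [Metric.continuous_iff] at hF ⊢
  intro x ε hε
  obtain ⟨δ, hδ, h⟩ := hF x ε hε
  exact ⟨δ, hδ, fun y hy => lt_of_le_of_lt (habs x y) (h y hy)⟩

theorem exists_goodOsc (P : Measure Ω) [IsProbabilityMeasure P] {X : ℤ → Ω → Fin d → ℝ}
    (hX : ∀ i, Measurable (X i)) (hlaw : ∀ i, P.map (X i) = P.map (X 1))
    (hcont : ∀ j, Continuous (margCdf P X j))
    (hτ : ∀ τ : ℝ, 0 < τ → ∃ q, 1 ≤ q ∧
      ∀ N, ∑ k ∈ Finset.range N, alphaMix P X (k + q) ≤ τ)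
    {ε η : ℝ} (hε : 0 < ε) (hη : 0 < η) :
    ∃ n₀ : ℕ, ∀ n ≥ n₀,
      P.real {ω | ¬ GoodOsc (empMeas X n ω) (P.map (X 1)) ε (1 / √n)} ≤ η := by
  classical
  obtain ⟨A, hA⟩ := exists_nat_ge (4 / ε + 1)
  have hA1 : (1 : ℝ) ≤ A := le_trans (by have := div_pos (by norm_num : (0 : ℝ) < 4) hε; linarith) hA
  have hA0 : (0 : ℝ) < A := by linarith
  have hA4 : 4 ≤ ε * A := by
    have : 4 / ε ≤ A := by linarith
    rw [div_le_iff₀ hε] at this; linarith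
  set e : ℝ := min (1 / (4 * A)) (ε / (2 * (2 + 12 * A))) with he_def
  have he : 0 < e := lt_min (by positivity) (by positivity)
  have he1 : 4 * A * e ≤ 1 := by
    have := min_le_left (1 / (4 * (A : ℝ))) (ε / (2 * (2 + 12 * A)))
    rw [← he_def, le_div_iff₀ (by positivity)] at this
    linarith
  have he2 : 2 * (2 + 12 * A) * e ≤ ε := by
    have := min_le_right (1 / (4 * (A : ℝ))) (ε / (2 * (2 + 12 * A)))
    rw [← he_def, le_div_iff₀ (by positivity)] at this
    linarith
  obtain ⟨K, hK⟩ := exists_nat_ge (2 * d / (A * e) + 1)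
  have hK1' : (1 : ℝ) ≤ K := le_trans (by have : 0 ≤ 2 * d / (A * e) := by positivity
                                          linarith) hK
  have hK1 : 1 ≤ K := by exact_mod_cast hK1'
  have hKd : 2 * d ≤ K * (A * e) := by
    have : 2 * d / (A * e) ≤ K := by linarith
    rwa [div_le_iff₀ (by positivity)] at this
  let ι := Fin d × (Fin d → Fin (K + 1))
  obtain ⟨n₁, hn₁⟩ := disjoint_family_bound (P := P) hX hlaw hτ A (half_pos he)
    (η := η / (Fintype.card ι + 1)) (by positivity)
  refine ⟨max n₁ 1, fun n hn => ?_⟩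
  have hn1 : n₁ ≤ n := le_trans (le_max_left _ _) hn
  have hn0 : 1 ≤ n := le_trans (le_max_right _ _) hn
  have hn0' : (1 : ℝ) ≤ n := by exact_mod_cast hn0
  have hs1 : (1 : ℝ) ≤ √n := Real.one_le_sqrt.2 hn0'
  have hs0 : 0 < √(n : ℝ) := by linarith
  have hss : √(n : ℝ) * √n = n := Real.mul_self_sqrt (by linarith)
  set N := A * (Nat.sqrt n + 1) with hNdef
  have hAN : 1 ≤ A := by exact_mod_cast hA1
  have hN : 1 ≤ N := Nat.mul_pos hAN (Nat.succ_pos _)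
  have hNle : N ≤ A * (n + 1) := Nat.mul_le_mul_left _ (Nat.succ_le_succ (Nat.sqrt_le_self n))
  have hNc : (N : ℝ) = A * (Nat.sqrt n + 1) := by rw [hNdef]; push_cast; ring
  have hNlow : A * √n ≤ N := by
    rw [hNc]; gcongr; exact Real.real_sqrt_lt_nat_sqrt_succ.le
  have hNhigh : N ≤ 2 * A * √n := by
    rw [hNc]
    have := Real.nat_sqrt_le_real_sqrt (a := n)
    nlinarith
  have hN0 : (0 : ℝ) < N := by exact_mod_cast hN
  have hνp : IsProbabilityMeasure (P.map (X 1)) :=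
    Measure.isProbabilityMeasure_map (hX 1).aemeasurable
  set ν := P.map (X 1) with hν
  have hF : ∀ k, Continuous fun x => ν.real {y : Fin d → ℝ | y k ≤ x} := by
    intro k
    convert hcont k using 2 with x
    have hm : MeasurableSet {y : Fin d → ℝ | y k ≤ x} := measurable_pi_apply k measurableSet_Iic
    rw [hν, map_measureReal_apply (hX 1) hm]
    rfl
  have hLex : ∀ j, ∃ L, QuantileChain (ν.map fun y => y j) N L := by
    intro j
    refine exists_quantileChain _ ?_ hN
    have := continuous_restrict_cdf ν j (hF j) univ
    rwa [Measure.restrict_univ] at this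
  choose L hL using hLex
  have hpm : ∀ j l, MeasurableSet (L j (l + 1) \ L j l) := fun j l =>
    (measurableSet_of_isLowerSet ((hL j).lower _)).diff
      (measurableSet_of_isLowerSet ((hL j).lower _))
  have hMex : ∀ j l k, ∃ M, QuantileChain
      ((ν.restrict {y | y j ∈ L j (l + 1) \ L j l}).map fun y => y k) K M := fun j l k =>
    exists_quantileChain _ (continuous_restrict_cdf ν k (hF k) _) hK1
  choose M hM using hMex
  let B : ι → ℕ → Set (Fin d → ℝ) := fun p l =>
    slab p.1 (fun k => M p.1 l k (p.2 k)) (L p.1 (l + 1) \ L p.1 l)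
  have hBm : ∀ p l, MeasurableSet (B p l) := fun p l =>
    measurableSet_slab _ (fun k => measurableSet_of_isLowerSet ((hM _ _ k).lower _)) (hpm _ _)
  have hstrip : ∀ j, ∀ l < N, ν.real {y | y j ∈ L j (l + 1) \ L j l} = 1 / N := by
    intro j l hl
    have hp := (hL j).mass_piece hl
    rw [map_measureReal_apply (measurable_pi_apply j) (hpm j l),
      map_measureReal_apply (measurable_pi_apply j) MeasurableSet.univ, preimage_univ,
      probReal_univ] at hp
    exact hp
  have hBdisj : ∀ p, ∀ s < N, ∀ t < N, s ≠ t → Disjoint (B p s) (B p t) := by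
    intro p
    have hlt : ∀ s t, s < t → Disjoint (B p s) (B p t) := by
      intro s t hst
      rw [Set.disjoint_left]
      intro y hy hy'
      exact hy'.1.2 ((hL p.1).mono (Nat.succ_le_of_lt hst) hy.1.1)
    intro s _ t _ hst
    rcases lt_or_gt_of_ne hst with h | h
    · exact hlt s t h
    · exact (hlt t s h).symm
  have hPB : ∀ p l, P.real (X 1 ⁻¹' B p l) = ν.real (B p l) := fun p l =>
    (map_measureReal_apply (hX 1) (hBm p l)).symm
  have hBmass : ∀ p, ∀ s < N, n * P.real (X 1 ⁻¹' B p s) ≤ √n := by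
    intro p s hs
    have h1 : ν.real (B p s) ≤ 1 / N := by
      rw [← hstrip p.1 s hs]
      exact measureReal_mono (fun y hy => hy.1) (measure_ne_top _ _)
    rw [hPB]
    calc n * ν.real (B p s) ≤ n * (1 / N) := by gcongr
      _ ≤ √n := by
        rw [mul_one_div, div_le_iff₀ hN0]
        nlinarith
  let bad : ι → Set Ω := fun p => {ω | ∃ s < N, e / 2 * √n <
    |∑ i ∈ Finset.range n, (B p s).indicator 1 (X ((i : ℤ) + 1) ω)
      - n * P.real (X 1 ⁻¹' B p s)|}
  have hbad : ∀ p, P.real (bad p) ≤ η / (Fintype.card ι + 1) := fun p =>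
    hn₁ n hn1 N hNle (B p) (hBm p) (hBdisj p) (hBmass p)
  have hsub : {ω | ¬ GoodOsc (empMeas X n ω) ν ε (1 / √n)}
      ⊆ ⋃ p ∈ (Finset.univ : Finset ι), bad p := by
    intro ω hω
    by_contra hcon
    refine hω ?_
    have hgood : ∀ p : ι, ∀ s < N,
        |∑ i ∈ Finset.range n, (B p s).indicator 1 (X ((i : ℤ) + 1) ω)
          - n * P.real (X 1 ⁻¹' B p s)| ≤ e / 2 * √n := by
      intro p s hs
      by_contra hlt
      refine hcon ?_
      simp only [mem_iUnion]
      exact ⟨p, Finset.mem_univ p, s, hs, not_le.1 hlt⟩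
    refine goodOsc_of_strips (empMeas X n ω) ν hN hL hA0 he (by positivity)
      (by rw [div_le_one hs0]; exact hs1) (by rw [mul_one_div, le_div_iff₀ hs0]; exact hNlow)
      (by rw [mul_one_div, div_le_iff₀ hs0]; exact hNhigh) he1 hA4 he2 ?_
    intro j l hl D hD
    have hb := strip_bracket (empMeas X n ω) ν j (hpm j l) hK1 (hM j l) (e := e / 2 * (1 / √n))
      (fun c hc => by
        have h1 := hgood (j, fun k => ⟨c k, Nat.lt_succ_of_le (hc k)⟩) l hl
        have h2 := hBm (j, fun k => ⟨c k, Nat.lt_succ_of_le (hc k)⟩) l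
        rw [hPB] at h1
        rw [empMeas_real X n ω h2]
        change |_ - ν.real (B (j, fun k => ⟨c k, Nat.lt_succ_of_le (hc k)⟩) l)| ≤ _
        set b := B (j, fun k => ⟨c k, Nat.lt_succ_of_le (hc k)⟩) l
        have h3 : (n : ℝ)⁻¹ * ∑ i ∈ Finset.range n, b.indicator 1 (X ((i : ℤ) + 1) ω) - ν.real b
            = (n : ℝ)⁻¹ * (∑ i ∈ Finset.range n, b.indicator 1 (X ((i : ℤ) + 1) ω)
              - n * ν.real b) := by
          field_simp
        rw [h3, abs_mul, abs_of_nonneg (by positivity)]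
        calc (n : ℝ)⁻¹ * _ ≤ (n : ℝ)⁻¹ * (e / 2 * √n) := by gcongr
          _ = e / 2 * (1 / √n) := by
            rw [inv_mul_eq_div, mul_one_div, div_eq_div_iff (by linarith) hs0.ne', mul_assoc, hss])
      hD
    refine hb.trans ?_
    rw [hstrip j l hl]
    have h4 : d * (1 / (N : ℝ) / K) ≤ e / 2 * (1 / √n) := by
      rw [div_div, mul_one_div, mul_one_div, div_le_div_iff₀ (by positivity) hs0]
      have h5 : (d : ℝ) ≤ K * (A * e) / 2 := by linarith
      calc (d : ℝ) * √n ≤ K * (A * e) / 2 * √n := by gcongr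
        _ = e / 2 * ((A * √n) * K) := by ring
        _ ≤ e / 2 * (N * K) := by gcongr
    linarith
  calc P.real {ω | ¬ GoodOsc (empMeas X n ω) ν ε (1 / √n)}
      ≤ P.real (⋃ p ∈ (Finset.univ : Finset ι), bad p) := measureReal_mono hsub (measure_ne_top _ _)
    _ ≤ ∑ p : ι, P.real (bad p) := measureReal_biUnion_finset_le _ _
    _ ≤ ∑ _p : ι, η / (Fintype.card ι + 1) := Finset.sum_le_sum fun p _ => hbad p
    _ = Fintype.card ι * (η / (Fintype.card ι + 1)) := by
      rw [Finset.sum_const, Finset.card_univ, nsmul_eq_mul]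
    _ ≤ η := by
      rw [← mul_div_assoc, div_le_iff₀ (by positivity)]
      nlinarith

/-! ### Ranks, empirical copula and copula -/

/-- The half-line of those `y` whose proportion of observations below, in coordinate `k`, is at
most `u`; an observation lies in it exactly when its normalized rank is at most `u`. -/
def rankSet (X : ℤ → Ω → Fin d → ℝ) (n : ℕ) (ω : Ω) (k : Fin d) (u : ℝ) : Set ℝ :=
  {y | (((Finset.Icc (1 : ℤ) n).filter fun m => X m ω k ≤ y).card : ℝ)
    / ((Finset.Icc (1 : ℤ) n).card : ℝ) ≤ u}

lemma isLowerSet_rankSet (X : ℤ → Ω → Fin d → ℝ) (n : ℕ) (ω : Ω) (k : Fin d) (u : ℝ) :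
    IsLowerSet (rankSet X n ω k u) := by
  intro y z hzy hy
  refine le_trans ?_ (show _ ≤ u from hy)
  gcongr with m

lemma rankSet_mono (X : ℤ → Ω → Fin d → ℝ) (n : ℕ) (ω : Ω) (k : Fin d) {u u' : ℝ} (h : u ≤ u') :
    rankSet X n ω k u ⊆ rankSet X n ω k u' :=
  fun _ hy => le_trans (show _ ≤ u from hy) h

lemma measurableSet_rankSet (X : ℤ → Ω → Fin d → ℝ) (n : ℕ) (ω : Ω) (k : Fin d) (u : ℝ) :
    MeasurableSet (rankSet X n ω k u) :=
  measurableSet_of_isLowerSet (isLowerSet_rankSet X n ω k u)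

lemma card_Icc_one (n : ℕ) : (Finset.Icc (1 : ℤ) n).card = n := by simp

lemma sum_Icc_one (n : ℕ) (f : ℤ → ℝ) :
    ∑ i ∈ Finset.Icc (1 : ℤ) n, f i = ∑ i ∈ Finset.range n, f ((i : ℤ) + 1) := by
  symm
  refine Finset.sum_bij (fun i _ => (i : ℤ) + 1) ?_ ?_ ?_ ?_
  · intro i hi; have := Finset.mem_range.1 hi; rw [Finset.mem_Icc]; omega
  · intro i _ i' _ h; simpa using h
  · intro b hb
    rw [Finset.mem_Icc] at hb
    refine ⟨(b - 1).toNat, ?_, ?_⟩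
    · rw [Finset.mem_range]; omega
    · omega
  · intro i _; rfl

lemma measurableSet_box {D : Fin d → Set ℝ} (hD : ∀ k, MeasurableSet (D k)) :
    MeasurableSet {y : Fin d → ℝ | ∀ k, y k ∈ D k} := by
  simp only [ofPred_forall]
  exact MeasurableSet.iInter fun k => measurable_pi_apply k (hD k)

lemma empCop_eq (X : ℤ → Ω → Fin d → ℝ) (n : ℕ) (ω : Ω) (u : Fin d → ℝ) :
    empCop X 1 n u ω = (empMeas X n ω).real {y | ∀ k, y k ∈ rankSet X n ω k (u k)} := by
  classical
  rw [empMeas_real X n ω (measurableSet_box fun k => measurableSet_rankSet X n ω k (u k)),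
    empCop, sum_Icc_one, card_Icc_one]
  congr 1
  refine Finset.sum_congr rfl fun i _ => ?_
  rw [indicator_apply]
  refine if_congr ?_ rfl rfl
  simp only [rank, rankSet, card_Icc_one, mem_ofPred_eq]

lemma box_update (j : Fin d) (D : Fin d → Set ℝ) (E : Set ℝ) :
    {y : Fin d → ℝ | ∀ k, y k ∈ Function.update D j E k} = slab j D E := by
  ext y
  constructor
  · intro h
    exact ⟨by simpa using h j, fun k hk => by simpa [hk] using h k⟩
  · rintro ⟨h1, h2⟩ k
    by_cases hk : k = j
    · subst hk; simpa using h1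
    · simpa [hk] using h2 k hk

lemma slab_real_sub (μ : Measure (Fin d → ℝ)) [IsFiniteMeasure μ] (j : Fin d)
    {D : Fin d → Set ℝ} (hD : ∀ k, MeasurableSet (D k)) {E E' : Set ℝ} (hE : MeasurableSet E)
    (h : E ⊆ E') : μ.real (slab j D E') - μ.real (slab j D E) = μ.real (slab j D (E' \ E)) := by
  rw [← measureReal_sdiff (slab_mono j (fun _ => subset_rfl) h) (measurableSet_slab j hD hE)]
  congr 1
  ext y
  constructor
  · rintro ⟨h1, h2⟩
    exact ⟨⟨h1.1, fun h3 => h2 ⟨h3, h1.2⟩⟩, h1.2⟩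
  · rintro ⟨h1, h2⟩
    exact ⟨⟨h1.1, h2⟩, fun h3 => h1.2 h3.1⟩

lemma empCop_update (X : ℤ → Ω → Fin d → ℝ) (n : ℕ) (ω : Ω) (u : Fin d → ℝ) (j : Fin d) (t : ℝ) :
    empCop X 1 n (Function.update u j t) ω
      = (empMeas X n ω).real (slab j (fun k => rankSet X n ω k (u k)) (rankSet X n ω j t)) := by
  rw [empCop_eq, ← box_update]
  congr 1
  ext y
  refine forall_congr' fun k => ?_
  by_cases hk : k = j
  · subst hk; simp
  · simp [hk]

lemma empCop_sub (X : ℤ → Ω → Fin d → ℝ) (n : ℕ) (ω : Ω) (u : Fin d → ℝ) (j : Fin d) {s t : ℝ}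
    (hst : s ≤ t) :
    empCop X 1 n (Function.update u j t) ω - empCop X 1 n (Function.update u j s) ω
      = (empMeas X n ω).real (slab j (fun k => rankSet X n ω k (u k))
          (rankSet X n ω j t \ rankSet X n ω j s)) := by
  rw [empCop_update, empCop_update, slab_real_sub _ _ (fun k => measurableSet_rankSet ..)
    (measurableSet_rankSet ..) (rankSet_mono _ _ _ _ hst)]

/-- Without ties the ranks are a permutation of `1, …, n`, so that exactly `m` of them are at most
`m`. -/
lemma card_rank_le {X : ℤ → Ω → Fin d → ℝ} {n : ℕ} {ω : Ω} {k : Fin d}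
    (hties : ∀ i ∈ Finset.Icc (1 : ℤ) n, ∀ i' ∈ Finset.Icc (1 : ℤ) n, i ≠ i' →
      X i ω k ≠ X i' ω k) {m : ℕ} (hm : m ≤ n) :
    ((Finset.Icc (1 : ℤ) n).filter fun i => rank X 1 n i k ω ≤ m).card = m := by
  set s := Finset.Icc (1 : ℤ) n with hs
  have hlt : ∀ i ∈ s, ∀ i' ∈ s, X i ω k < X i' ω k → rank X 1 n i k ω < rank X 1 n i' k ω := by
    intro i _ i' hi' h
    refine Finset.card_lt_card ((Finset.ssubset_iff_of_subset ?_).2 ⟨i', ?_, ?_⟩)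
    · intro l hl
      rw [Finset.mem_filter] at hl ⊢
      exact ⟨hl.1, hl.2.trans h.le⟩
    · exact Finset.mem_filter.2 ⟨hi', le_rfl⟩
    · exact fun hh => absurd (Finset.mem_filter.1 hh).2 (not_le.2 h)
  have hinj : Set.InjOn (fun i => rank X 1 n i k ω) s := by
    intro i hi i' hi' h
    by_contra hne
    rcases lt_or_gt_of_ne (hties i hi i' hi' hne) with h' | h'
    · exact (hlt i hi i' hi' h').ne h
    · exact (hlt i' hi' i hi h').ne' h
  have himg : s.image (fun i => rank X 1 n i k ω) = Finset.Icc 1 n := by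
    refine Finset.eq_of_subset_of_card_le ?_ ?_
    · intro r hr
      obtain ⟨i, hi, rfl⟩ := Finset.mem_image.1 hr
      rw [Finset.mem_Icc]
      refine ⟨Finset.card_pos.2 ⟨i, Finset.mem_filter.2 ⟨hi, le_rfl⟩⟩, ?_⟩
      exact (Finset.card_filter_le _ _).trans (card_Icc_one n).le
    · rw [Finset.card_image_of_injOn hinj, card_Icc_one]; simp
  have h1 : (s.filter fun i => rank X 1 n i k ω ≤ m).card
      = ((s.image fun i => rank X 1 n i k ω).filter fun r => r ≤ m).card := by
    rw [Finset.filter_image, Finset.card_image_of_injOn]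
    exact hinj.mono fun i hi => (Finset.mem_filter.1 hi).1
  rw [h1, himg]
  have : (Finset.Icc 1 n).filter (fun r => r ≤ m) = Finset.Icc 1 m := by
    ext r; simp only [Finset.mem_filter, Finset.mem_Icc]; omega
  rw [this]; simp

lemma empMeas_rankSet {X : ℤ → Ω → Fin d → ℝ} {n : ℕ} (hn : 1 ≤ n) {ω : Ω} {k : Fin d}
    (hties : ∀ i ∈ Finset.Icc (1 : ℤ) n, ∀ i' ∈ Finset.Icc (1 : ℤ) n, i ≠ i' →
      X i ω k ≠ X i' ω k) {u : ℝ} (hu : u ∈ Icc (0 : ℝ) 1) :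
    (empMeas X n ω).real {y | y k ∈ rankSet X n ω k u} ∈ Icc (u - 1 / n) u := by
  have hn0 : (0 : ℝ) < n := by exact_mod_cast hn
  have hnu : 0 ≤ n * u := mul_nonneg hn0.le hu.1
  have hfl : ⌊n * u⌋₊ ≤ n := by
    rw [← Nat.floor_natCast (R := ℝ) n]
    exact Nat.floor_mono (by simpa using mul_le_mul_of_nonneg_left hu.2 hn0.le)
  have hm : MeasurableSet {y : Fin d → ℝ | y k ∈ rankSet X n ω k u} :=
    measurable_pi_apply k (measurableSet_rankSet X n ω k u)
  have h1 : (empMeas X n ω).real {y | y k ∈ rankSet X n ω k u} = (n : ℝ)⁻¹ * ⌊n * u⌋₊ := by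
    rw [empMeas_real X n ω hm, ← sum_Icc_one n fun i =>
      ({y : Fin d → ℝ | y k ∈ rankSet X n ω k u}.indicator 1 (X i ω) : ℝ)]
    classical
    congr 1
    have h2 := card_rank_le hties hfl
    rw [← h2, Finset.card_filter, Nat.cast_sum]
    refine Finset.sum_congr rfl fun i _ => ?_
    rw [indicator_apply]
    push_cast
    refine if_congr ?_ rfl rfl
    rw [Nat.le_floor_iff hnu, mem_ofPred_eq, rankSet, mem_ofPred_eq, card_Icc_one,
      div_le_iff₀ hn0, mul_comm u]
    rfl
  rw [h1, inv_mul_eq_div]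
  constructor
  · rw [le_div_iff₀ hn0, sub_mul, one_div, inv_mul_cancel₀ hn0.ne']
    have := Nat.lt_floor_add_one (n * u)
    linarith
  · rw [div_le_iff₀ hn0, mul_comm u]
    exact Nat.floor_le hnu

/-- The law of `X 1` of a box of lower sets is the copula at the marginal masses. -/
lemma copula_eq (P : Measure Ω) [IsProbabilityMeasure P] {X : ℤ → Ω → Fin d → ℝ}
    (hX : ∀ i, Measurable (X i)) (hcont : ∀ j, Continuous (margCdf P X j))
    {D : Fin d → Set ℝ} (hD : ∀ k, IsLowerSet (D k)) :
    (P.map (X 1)).real {y | ∀ k, y k ∈ D k}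
      = copula P X fun k => (P.map (X 1)).real {y | y k ∈ D k} := by
  have hνp : IsProbabilityMeasure (P.map (X 1)) :=
    Measure.isProbabilityMeasure_map (hX 1).aemeasurable
  set ν := P.map (X 1) with hν
  have hDm : ∀ k, MeasurableSet (D k) := fun k => measurableSet_of_isLowerSet (hD k)
  set v : Fin d → ℝ := fun k => ν.real {y | y k ∈ D k} with hv
  set G : Fin d → Set ℝ := fun k => {x | margCdf P X k x ≤ v k} with hG
  have hGm : ∀ k, MeasurableSet (G k) := fun k => (isClosed_le (hcont k) continuous_const).measurableSet
  have hcop : copula P X v = ν.real {y | ∀ k, y k ∈ G k} := by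
    rw [hν, map_measureReal_apply (hX 1) (measurableSet_box hGm)]
    rfl
  have hF : ∀ k x, (ν.map fun y => y k).real (Iic x) = margCdf P X k x := by
    intro k x
    rw [map_measureReal_apply (measurable_pi_apply k) measurableSet_Iic, hν,
      map_measureReal_apply (hX 1) (measurable_pi_apply k measurableSet_Iic)]
    rfl
  have hDG : ∀ k, D k ⊆ G k := by
    intro k x hx
    change margCdf P X k x ≤ v k
    rw [← hF, map_measureReal_apply (measurable_pi_apply k) measurableSet_Iic]
    exact measureReal_mono (fun y hy => hD k hy hx) (measure_ne_top _ _)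
  have hmass : ∀ k, ν.real {y | y k ∈ G k} = v k := by
    intro k
    have h := measure_cdf_le (ν.map fun y => y k) (by simpa only [hF] using hcont k)
      (θ := v k) measureReal_nonneg (by
        rw [map_measureReal_apply (measurable_pi_apply k) MeasurableSet.univ]
        exact measureReal_mono (subset_univ _) (measure_ne_top _ _))
    simp only [hF] at h
    rw [map_measureReal_apply (measurable_pi_apply k) (hGm k)] at h
    exact h
  rw [hcop]
  refine le_antisymm (measureReal_mono (fun y hy k => hDG k (hy k)) (measure_ne_top _ _)) ?_
  have hsub : {y : Fin d → ℝ | ∀ k, y k ∈ G k} ⊆ {y | ∀ k, y k ∈ D k} ∪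
      ⋃ k ∈ (Finset.univ : Finset (Fin d)), ({y | y k ∈ G k} \ {y | y k ∈ D k}) := by
    intro y hy
    by_cases h : ∀ k, y k ∈ D k
    · exact Or.inl h
    · push Not at h
      obtain ⟨k, hk⟩ := h
      refine Or.inr ?_
      simp only [mem_iUnion]
      exact ⟨k, Finset.mem_univ k, hy k, hk⟩
  refine (measureReal_mono hsub (measure_ne_top _ _)).trans ((measureReal_union_le _ _).trans ?_)
  have h0 : ν.real (⋃ k ∈ (Finset.univ : Finset (Fin d)),
      ({y : Fin d → ℝ | y k ∈ G k} \ {y | y k ∈ D k})) ≤ 0 := by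
    refine (measureReal_biUnion_finset_le _ _).trans (le_of_eq (Finset.sum_eq_zero fun k _ => ?_))
    have hm : MeasurableSet {y : Fin d → ℝ | y k ∈ D k} := measurable_pi_apply k (hDm k)
    have hs : {y : Fin d → ℝ | y k ∈ D k} ⊆ {y | y k ∈ G k} := fun y hy => hDG k hy
    rw [measureReal_sdiff hs hm, hmass k]
    simp [hv]
  linarith

/-! ### Boundedness and consistency of the estimators -/

lemma rpow_neg_half (n : ℕ) : (n : ℝ) ^ (-(1 / 2 : ℝ)) = 1 / √n := by
  rw [Real.rpow_neg (Nat.cast_nonneg n), ← Real.sqrt_eq_rpow, one_div]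

lemma setOf_sdiff_real (μ : Measure (Fin d → ℝ)) [IsFiniteMeasure μ] (j : Fin d) {E E' : Set ℝ}
    (hE : MeasurableSet E) (h : E ⊆ E') :
    μ.real {y | y j ∈ E' \ E} = μ.real {y | y j ∈ E'} - μ.real {y | y j ∈ E} := by
  have := slab_real_sub μ j (D := fun _ => univ) (fun _ => MeasurableSet.univ) hE h
  simpa only [slab_univ] using this.symm

/-- Without ties, the `j`-th slab between two levels has empirical thickness the difference of the
levels, up to `1 / n`. -/
lemma abs_thickness_sub_le {X : ℤ → Ω → Fin d → ℝ} {n : ℕ} (hn : 1 ≤ n) {ω : Ω} {j : Fin d}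
    (hties : ∀ i ∈ Finset.Icc (1 : ℤ) n, ∀ i' ∈ Finset.Icc (1 : ℤ) n, i ≠ i' →
      X i ω j ≠ X i' ω j) {s t : ℝ} (hs : s ∈ Icc (0 : ℝ) 1) (ht : t ∈ Icc (0 : ℝ) 1)
    (hst : s ≤ t) :
    |(empMeas X n ω).real {y | y j ∈ rankSet X n ω j t \ rankSet X n ω j s} - (t - s)|
      ≤ 1 / n := by
  rw [setOf_sdiff_real _ _ (measurableSet_rankSet ..) (rankSet_mono _ _ _ _ hst), abs_le]
  have h1 := empMeas_rankSet hn hties hs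
  have h2 := empMeas_rankSet hn hties ht
  constructor <;> linarith [h1.1, h1.2, h2.1, h2.2]

lemma abs_CdotEst_le (P : Measure Ω) {X : ℤ → Ω → Fin d → ℝ} {n : ℕ} (hn : 1 ≤ n) {ω : Ω}
    {j : Fin d}
    (hties : ∀ i ∈ Finset.Icc (1 : ℤ) n, ∀ i' ∈ Finset.Icc (1 : ℤ) n, i ≠ i' →
      X i ω j ≠ X i' ω j) {u : Fin d → ℝ} (hu : ∀ i, u i ∈ Icc (0 : ℝ) 1) :
    |CdotEst P X j n u ω| ≤ 3 / 2 := by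
  have hn0 : (1 : ℝ) ≤ n := by exact_mod_cast hn
  have hs1 : (1 : ℝ) ≤ √n := Real.one_le_sqrt.2 hn0
  have hss : √(n : ℝ) * √n = n := Real.mul_self_sqrt (by linarith)
  rw [CdotEst, rpow_neg_half]
  set h : ℝ := 1 / √n with hh
  have hpos : 0 < h := by positivity
  have hle : 1 / (n : ℝ) ≤ h := one_div_le_one_div_of_le (by linarith) (by nlinarith)
  have huj := hu j
  have hw : max (u j - h) 0 ≤ min (u j + h) 1 := by
    refine max_le (le_min ?_ ?_) (le_min ?_ ?_) <;> linarith [huj.1, huj.2]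
  have hw1 : max (u j - h) 0 ∈ Icc (0 : ℝ) 1 :=
    ⟨le_max_right _ _, max_le (by linarith [huj.2]) zero_le_one⟩
  have hw2 : min (u j + h) 1 ∈ Icc (0 : ℝ) 1 :=
    ⟨le_min (by linarith [huj.1]) zero_le_one, min_le_right _ _⟩
  rw [empCop_sub X n ω u j hw, abs_of_nonneg (by positivity)]
  have ht := (abs_le.1 (abs_thickness_sub_le hn hties hw1 hw2 hw)).2
  have hmono : (empMeas X n ω).real (slab j (fun k => rankSet X n ω k (u k))
      (rankSet X n ω j (min (u j + h) 1) \ rankSet X n ω j (max (u j - h) 0)))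
      ≤ (empMeas X n ω).real {y | y j ∈
        rankSet X n ω j (min (u j + h) 1) \ rankSet X n ω j (max (u j - h) 0)} :=
    measureReal_mono (fun y hy => hy.1) (measure_ne_top _ _)
  have h1 := min_le_left (u j + h) 1
  have h2 := le_max_left (u j - h) 0
  rw [inv_mul_le_iff₀ (by positivity)]
  linarith

/-- On the good event, the increments of the empirical copula are, up to `ε h`, increments of the
copula between nearby points. -/
lemma exists_copula_increment (P : Measure Ω) [IsProbabilityMeasure P] {X : ℤ → Ω → Fin d → ℝ}
    (hX : ∀ i, Measurable (X i)) (hcont : ∀ j, Continuous (margCdf P X j)) {n : ℕ} (hn : 1 ≤ n)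
    {ω : Ω} (hties : ∀ k, ∀ i ∈ Finset.Icc (1 : ℤ) n, ∀ i' ∈ Finset.Icc (1 : ℤ) n, i ≠ i' →
      X i ω k ≠ X i' ω k) {ε : ℝ} (hgood : GoodOsc (empMeas X n ω) (P.map (X 1)) ε (1 / √n))
    {u : Fin d → ℝ} (hu : ∀ i, u i ∈ Icc (0 : ℝ) 1) {j : Fin d} (h1 : 1 / √n ≤ u j)
    (h2 : u j ≤ 1 - 1 / √n) :
    ∃ (v : Fin d → ℝ) (s t : ℝ), (∀ k, v k ∈ Icc (0 : ℝ) 1) ∧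
      (∀ k, |v k - u k| ≤ ε + 1 / n) ∧ s ≤ t ∧
      |s - (u j - 1 / √n)| ≤ ε + 1 / n ∧ |t - (u j + 1 / √n)| ≤ ε + 1 / n ∧
      |t - s - 2 * (1 / √n)| ≤ ε * (1 / √n) + 1 / n ∧
      |(empCop X 1 n (Function.update u j (u j + 1 / √n)) ω
        - empCop X 1 n (Function.update u j (u j - 1 / √n)) ω)
        - (copula P X (Function.update v j t) - copula P X (Function.update v j s))|
        ≤ ε * (1 / √n) := by
  have hn0 : (1 : ℝ) ≤ n := by exact_mod_cast hn
  have hs1 : (1 : ℝ) ≤ √n := Real.one_le_sqrt.2 hn0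
  have hss : √(n : ℝ) * √n = n := Real.mul_self_sqrt (by linarith)
  set h : ℝ := 1 / √n with hh
  have hpos : 0 < h := by positivity
  have hle : 1 / (n : ℝ) ≤ h := one_div_le_one_div_of_le (by linarith) (by nlinarith)
  have hνp : IsProbabilityMeasure (P.map (X 1)) :=
    Measure.isProbabilityMeasure_map (hX 1).aemeasurable
  set ν := P.map (X 1) with hν
  set γ := empMeas X n ω with hγ
  set D : Fin d → Set ℝ := fun k => rankSet X n ω k (u k) with hD
  have hDl : ∀ k, IsLowerSet (D k) := fun k => isLowerSet_rankSet X n ω k (u k)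
  have hDm : ∀ k, MeasurableSet (D k) := fun k => measurableSet_rankSet X n ω k (u k)
  set E := rankSet X n ω j (u j - h) with hE
  set E' := rankSet X n ω j (u j + h) with hE'
  have hEl : IsLowerSet E := isLowerSet_rankSet ..
  have hE'l : IsLowerSet E' := isLowerSet_rankSet ..
  have hEm : MeasurableSet E := measurableSet_rankSet ..
  have hEE : E ⊆ E' := rankSet_mono _ _ _ _ (by linarith)
  have hlev : ∀ k (w : ℝ), w ∈ Icc (0 : ℝ) 1 →
      |ν.real {y | y k ∈ rankSet X n ω k w} - w| ≤ ε + 1 / n := by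
    intro k w hw
    have a1 := abs_le.1 (hgood.half k _ (isLowerSet_rankSet X n ω k w))
    have a2 := empMeas_rankSet hn (hties k) hw
    have a3 : 0 ≤ 1 / (n : ℝ) := by positivity
    rw [abs_le]
    constructor <;> linarith [a1.1, a1.2, a2.1, a2.2]
  have hm1 : u j - h ∈ Icc (0 : ℝ) 1 := ⟨by linarith, by linarith [(hu j).2]⟩
  have hm2 : u j + h ∈ Icc (0 : ℝ) 1 := ⟨by linarith [(hu j).1], by linarith⟩
  have hthick := abs_le.1 (abs_thickness_sub_le hn (hties j) hm1 hm2 (by linarith))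
  have hthin : γ.real {y | y j ∈ E' \ E} ≤ 3 * h := by linarith [hthick.2]
  have hcop : ∀ T : Set ℝ, IsLowerSet T → ν.real (slab j D T)
      = copula P X (Function.update (fun k => ν.real {y | y k ∈ D k}) j
          (ν.real {y | y j ∈ T})) := by
    intro T hT
    have hl : ∀ k, IsLowerSet (Function.update D j T k) := by
      intro k
      by_cases hk : k = j
      · subst hk; simpa using hT
      · simpa [hk] using hDl k
    rw [← box_update, hν, copula_eq P hX hcont hl]
    congr 1
    ext k
    by_cases hk : k = j
    · subst hk; simp
    · simp [hk]
  refine ⟨fun k => ν.real {y | y k ∈ D k}, ν.real {y | y j ∈ E}, ν.real {y | y j ∈ E'},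
    fun k => ⟨measureReal_nonneg, measureReal_le_one⟩, fun k => hlev k _ (hu k),
    measureReal_mono (fun y hy => hEE hy) (measure_ne_top _ _), hlev j _ hm1, hlev j _ hm2, ?_, ?_⟩
  · have a1 := hgood.thin j (fun _ => univ) E E' (fun _ => isLowerSet_univ) hEl hE'l hEE hthin
    rw [slab_univ, setOf_sdiff_real ν j hEm hEE] at a1
    have a2 := abs_le.1 a1
    rw [abs_le]
    constructor <;> linarith [hthick.1, hthick.2, a2.1, a2.2]
  · rw [empCop_sub X n ω u j (by linarith), ← hcop E' hE'l, ← hcop E hEl,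
      slab_real_sub ν j hDm hEm hEE]
    exact hgood.thin j D E E' hDl hEl hE'l hEE hthin

/-- The deterministic heart of consistency: for a small enough tolerance, the good event forces the
estimator to be uniformly `ε`-close to the partial derivative. -/
lemma exists_tolerance (P : Measure Ω) [IsProbabilityMeasure P] {X : ℤ → Ω → Fin d → ℝ}
    (hX : ∀ i, Measurable (X i)) (hcont : ∀ j, Continuous (margCdf P X j)) {j : Fin d}
    {c : (Fin d → ℝ) → ℝ}
    (hderiv : ∀ u : Fin d → ℝ, (∀ i, u i ∈ Icc (0 : ℝ) 1) → u j ∈ Ioo (0 : ℝ) 1 →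
      HasDerivWithinAt (fun v => copula P X (Function.update u j v)) (c u) (Icc (0 : ℝ) 1) (u j))
    (hc : ContinuousOn c {u : Fin d → ℝ | (∀ i, u i ∈ Icc (0 : ℝ) 1) ∧ u j ∈ Ioo (0 : ℝ) 1})
    {δ ε : ℝ} (hδ : 0 < δ) (hε : 0 < ε) :
    ∃ κ : ℝ, 0 < κ ∧ ∀ (n : ℕ) (ω : Ω), 1 ≤ n → 1 / √n ≤ κ →
      (∀ k, ∀ i ∈ Finset.Icc (1 : ℤ) n, ∀ i' ∈ Finset.Icc (1 : ℤ) n, i ≠ i' →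
        X i ω k ≠ X i' ω k) →
      GoodOsc (empMeas X n ω) (P.map (X 1)) κ (1 / √n) →
      ∀ u : Fin d → ℝ, (∀ i, u i ∈ Icc (0 : ℝ) 1) → u j ∈ Icc δ (1 - δ) →
        |CdotEst P X j n u ω - c u| ≤ ε := by
  set T : Set (Fin d → ℝ) :=
    {u | (∀ i, u i ∈ Icc (0 : ℝ) 1) ∧ u j ∈ Icc (δ / 2) (1 - δ / 2)} with hT
  have hTc : IsCompact T := by
    have h1 : IsCompact (Set.pi univ fun _ : Fin d => Icc (0 : ℝ) 1) :=
      isCompact_univ_pi fun _ => isCompact_Icc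
    have h2 : IsClosed {u : Fin d → ℝ | u j ∈ Icc (δ / 2) (1 - δ / 2)} :=
      isClosed_Icc.preimage (continuous_apply j)
    have : T = Set.pi univ (fun _ : Fin d => Icc (0 : ℝ) 1)
        ∩ {u : Fin d → ℝ | u j ∈ Icc (δ / 2) (1 - δ / 2)} := by
      ext u; exact and_congr_left' (by simp only [Set.mem_pi, mem_univ, forall_const])
    rw [this]
    exact h1.inter_right h2
  have hcT : ContinuousOn c T := hc.mono fun u hu =>
    ⟨hu.1, by linarith [hu.2.1], by linarith [hu.2.2]⟩
  obtain ⟨B, hB⟩ := hTc.exists_bound_of_continuousOn hcT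
  obtain ⟨ρ, hρ, hunif⟩ := Metric.uniformContinuousOn_iff.1
    (hTc.uniformContinuousOn_of_continuous hcT) (ε / 2) (by positivity)
  set κ : ℝ := min (min (ρ / 4) (δ / 6)) (ε / (2 * (1 + |B|))) with hκ_def
  have hκ : 0 < κ := lt_min (lt_min (by positivity) (by positivity)) (by positivity)
  have hκρ : κ ≤ ρ / 4 := (min_le_left _ _).trans (min_le_left _ _)
  have hκδ : κ ≤ δ / 6 := (min_le_left _ _).trans (min_le_right _ _)
  have hκε : (1 + |B|) * κ ≤ ε / 2 := by
    have : κ ≤ ε / (2 * (1 + |B|)) := min_le_right _ _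
    rw [le_div_iff₀ (by positivity)] at this
    linarith
  refine ⟨κ, hκ, fun n ω hn hnκ hties hgood u hu huj => ?_⟩
  have hn0 : (1 : ℝ) ≤ n := by exact_mod_cast hn
  have hs1 : (1 : ℝ) ≤ √n := Real.one_le_sqrt.2 hn0
  have hss : √(n : ℝ) * √n = n := Real.mul_self_sqrt (by linarith)
  obtain ⟨v, s, t, hv, hvu, hst, hs, ht, hts, hinc⟩ := exists_copula_increment P hX hcont hn hties
    hgood hu (j := j) (by linarith [huj.1]) (by linarith [huj.2])
  rw [CdotEst, rpow_neg_half]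
  have hnn : 1 / (n : ℝ) = 1 / √n * (1 / √n) := by
    rw [div_mul_div_comm, hss, one_mul]
  set h : ℝ := 1 / √n with hh
  have hpos : 0 < h := by positivity
  have hle : 1 / (n : ℝ) ≤ h := one_div_le_one_div_of_le (by linarith) (by nlinarith)
  rw [min_eq_left (by linarith [huj.2]), max_eq_left (by linarith [huj.1])]
  set G := empCop X 1 n (Function.update u j (u j + h)) ω
    - empCop X 1 n (Function.update u j (u j - h)) ω with hG
  have hs' := abs_le.1 hs
  have ht' := abs_le.1 ht
  have hts' := abs_le.1 hts
  have hslow : δ / 2 ≤ s := by linarith [huj.1, hs'.1]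
  have hthigh : t ≤ 1 - δ / 2 := by linarith [huj.2, ht'.2]
  have hst' : s < t := by
    rw [hnn] at hts'
    have hκ2 : κ ≤ 1 / 2 := by linarith [huj.1, huj.2]
    have := mul_le_mul_of_nonneg_right hnκ hpos.le
    have := mul_le_mul_of_nonneg_right hκ2 hpos.le
    linarith [hts'.1]
  have hmem : ∀ x ∈ Icc s t, Function.update v j x ∈ T := by
    intro x hx
    refine ⟨fun i => ?_, ?_⟩
    · by_cases hi : i = j
      · subst hi
        simp only [Function.update_self]
        exact ⟨by linarith [hx.1], by linarith [hx.2]⟩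
      · simpa [hi] using hv i
    · simp only [Function.update_self]
      exact ⟨by linarith [hx.1], by linarith [hx.2]⟩
  have hder : ∀ x ∈ Icc s t, HasDerivAt (fun z => copula P X (Function.update v j z))
      (c (Function.update v j x)) x := by
    intro x hx
    have hm := hmem x hx
    have hx0 : 0 < x := by linarith [hx.1]
    have hx1 : x < 1 := by linarith [hx.2]
    have := hderiv (Function.update v j x) hm.1 (by simpa using ⟨hx0, hx1⟩)
    simp only [Function.update_idem, Function.update_self] at this
    exact this.hasDerivAt (Icc_mem_nhds hx0 hx1)
  obtain ⟨ξ, hξ, hslope⟩ := exists_hasDerivAt_eq_slope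
    (fun z => copula P X (Function.update v j z)) (fun x => c (Function.update v j x)) hst'
    (fun x hx => (hder x hx).continuousAt.continuousWithinAt)
    (fun x hx => hder x (Ioo_subset_Icc_self hx))
  have hξT := hmem ξ (Ioo_subset_Icc_self hξ)
  have hslope' : copula P X (Function.update v j t) - copula P X (Function.update v j s)
      = c (Function.update v j ξ) * (t - s) := by
    have := sub_pos.2 hst'
    field_simp at hslope
    linarith
  rw [hslope'] at hinc
  have huT : u ∈ T := ⟨hu, by linarith [huj.1], by linarith [huj.2]⟩
  have hdist : dist (Function.update v j ξ) u < ρ := by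
    rw [dist_pi_lt_iff hρ]
    intro i
    rw [Real.dist_eq, abs_lt]
    by_cases hi : i = j
    · subst hi
      simp only [Function.update_self]
      constructor <;> linarith [hξ.1, hξ.2, hs'.1, ht'.2]
    · have := abs_le.1 (hvu i)
      simp only [Function.update_of_ne hi]
      constructor <;> linarith [this.1, this.2]
  have hcc := hunif _ hξT _ huT hdist
  rw [Real.dist_eq] at hcc
  have hcB : |c (Function.update v j ξ)| ≤ |B| := by
    have := hB _ hξT
    rw [Real.norm_eq_abs] at this
    exact this.trans (le_abs_self B)
  set cξ := c (Function.update v j ξ)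
  have hsplit : (2 * h)⁻¹ * G - c u
      = (2 * h)⁻¹ * (G - cξ * (t - s)) + (2 * h)⁻¹ * (cξ * (t - s - 2 * h)) + (cξ - c u) := by
    field_simp
    ring
  rw [hsplit]
  have e1 : |(2 * h)⁻¹ * (G - cξ * (t - s))| ≤ κ / 2 := by
    rw [abs_mul, abs_of_pos (by positivity), inv_mul_le_iff₀ (by positivity)]
    linarith
  have e2 : |(2 * h)⁻¹ * (cξ * (t - s - 2 * h))| ≤ |B| * κ := by
    rw [abs_mul, abs_of_pos (by positivity), inv_mul_le_iff₀ (by positivity), abs_mul]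
    have h3 : |t - s - 2 * h| ≤ 2 * h * κ := by
      rw [hnn] at hts
      have := mul_le_mul_of_nonneg_right hnκ hpos.le
      linarith
    calc |cξ| * |t - s - 2 * h| ≤ |B| * (2 * h * κ) := by gcongr
      _ = 2 * h * (|B| * κ) := by ring
  calc _ ≤ |(2 * h)⁻¹ * (G - cξ * (t - s))| + |(2 * h)⁻¹ * (cξ * (t - s - 2 * h))|
        + |cξ - c u| := abs_add_three _ _ _
    _ ≤ κ / 2 + |B| * κ + ε / 2 := by gcongr
    _ ≤ ε := by linarith

lemma map_eq_of_stationary {P : Measure Ω} {X : ℤ → Ω → Fin d → ℝ} (hX : ∀ i, Measurable (X i))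
    (hstat : Stationary P X) (i : ℤ) : P.map (X i) = P.map (X 1) := by
  have h := congrArg (fun μ => Measure.map (fun x : ℤ → Fin d → ℝ => x 1) μ) (hstat (i - 1))
  rw [Measure.map_map (measurable_pi_apply 1) (measurable_pi_lambda _ fun k => hX _),
    Measure.map_map (measurable_pi_apply 1) (measurable_pi_lambda _ fun k => hX _)] at h
  have e : (1 : ℤ) + (i - 1) = i := by ring
  simpa only [Function.comp_def, e] using h

lemma exists_tail_le {P : Measure Ω} [IsProbabilityMeasure P] {X : ℤ → Ω → Fin d → ℝ}
    {a Ca : ℝ} (ha : 1 < a)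
    (hmix : ∀ r : ℕ, 1 ≤ r → alphaMix P X r ≤ Ca * (r : ℝ) ^ (-a)) {τ : ℝ} (hτ : 0 < τ) :
    ∃ q, 1 ≤ q ∧ ∀ N, ∑ k ∈ Finset.range N, alphaMix P X (k + q) ≤ τ := by
  set g : ℕ → ℝ := fun r => |Ca| * (r : ℝ) ^ (-a) with hg
  have hgs : Summable g := (Real.summable_nat_rpow.2 (by linarith)).mul_left _
  have hg0 : ∀ r, 0 ≤ g r := fun r => by positivity
  have ht := (tendsto_order.1 (tendsto_sum_nat_add g)).2 τ hτ
  obtain ⟨q, hq, hq1⟩ := (ht.and (eventually_ge_atTop 1)).exists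
  refine ⟨q, hq1, fun N => le_trans ?_ hq.le⟩
  calc ∑ k ∈ Finset.range N, alphaMix P X (k + q) ≤ ∑ k ∈ Finset.range N, g (k + q) := by
        refine Finset.sum_le_sum fun k _ => (hmix (k + q) (by omega)).trans ?_
        exact mul_le_mul_of_nonneg_right (le_abs_self Ca) (by positivity)
    _ ≤ ∑' k, g (k + q) :=
        ((summable_nat_add_iff q).2 hgs).sum_le_tsum _ fun k _ => hg0 _

/-- Consistency of the finite-difference partial derivative
estimators. Under strong mixing with `α_r = O(r^{−a})`, `a > 1`, continuous
margins, and Conditions (pd) and (noTies):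
(i) the estimators are almost surely uniformly bounded, and
(ii) for every `δ ∈ (0,1/2)` and every `j`,
`sup_{u ∈ [0,1]^d, u_j ∈ [δ,1−δ]} |Ċ_{j,n}(u) − Ċ_j(u)| → 0` in outer
probability. -/
theorem partial_derivative_estimator_consistency
    (P : Measure Ω) [IsProbabilityMeasure P] (hd : 1 ≤ d)
    (X : ℤ → Ω → Fin d → ℝ) (hXmeas : ∀ i, Measurable (X i))
    (hXstat : Stationary P X)
    (hcont : ∀ j, Continuous (margCdf P X j))
    (a : ℝ) (ha : 1 < a) (Ca : ℝ)
    (hmix : ∀ r : ℕ, 1 ≤ r → alphaMix P X r ≤ Ca * (r : ℝ) ^ (-a))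
    -- Condition (pd)
    (Cdot : Fin d → (Fin d → ℝ) → ℝ)
    (hpd_deriv : ∀ (j : Fin d) (u : Fin d → ℝ), (∀ i, u i ∈ Icc (0 : ℝ) 1) →
      u j ∈ Ioo (0 : ℝ) 1 →
      HasDerivWithinAt (fun v => copula P X (Function.update u j v))
        (Cdot j u) (Icc (0 : ℝ) 1) (u j))
    (hpd_cont : ∀ j : Fin d,
      ContinuousOn (Cdot j)
        {u : Fin d → ℝ | (∀ i, u i ∈ Icc (0 : ℝ) 1) ∧ u j ∈ Ioo (0 : ℝ) 1})
    (hpd_zero : ∀ (j : Fin d) (u : Fin d → ℝ), u j = 0 ∨ u j = 1 → Cdot j u = 0)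
    -- Condition (noTies)
    (hties : ∀ (n : ℕ) (j : Fin d), ∀ᵐ ω ∂P,
      ∀ i ∈ Finset.Icc (1 : ℤ) (n : ℤ), ∀ i' ∈ Finset.Icc (1 : ℤ) (n : ℤ),
        i ≠ i' → X i ω j ≠ X i' ω j) :
    (∃ K : ℝ, 0 < K ∧ ∀ᵐ ω ∂P, ∀ (j : Fin d) (n : ℕ), 1 ≤ n →
      ∀ u : Fin d → ℝ, (∀ i, u i ∈ Icc (0 : ℝ) 1) →
        |CdotEst P X j n u ω| ≤ K) ∧
    (∀ δ : ℝ, δ ∈ Ioo (0 : ℝ) (1 / 2) → ∀ j : Fin d, ∀ ε : ℝ, 0 < ε →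
      Tendsto
        (fun n : ℕ =>
          (P.toOuterMeasure {ω | ε <
            sSup {x : ℝ | ∃ u : Fin d → ℝ,
              (∀ i, u i ∈ Icc (0 : ℝ) 1) ∧ u j ∈ Icc δ (1 - δ) ∧
              x = |CdotEst P X j n u ω - Cdot j u|}}).toReal)
        atTop (nhds 0)) := by
  refine ⟨⟨3 / 2, by norm_num, ?_⟩, ?_⟩
  · have hall : ∀ᵐ ω ∂P, ∀ (n : ℕ) (j : Fin d), ∀ i ∈ Finset.Icc (1 : ℤ) (n : ℤ),
        ∀ i' ∈ Finset.Icc (1 : ℤ) (n : ℤ), i ≠ i' → X i ω j ≠ X i' ω j :=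
      ae_all_iff.2 fun n => ae_all_iff.2 fun j => hties n j
    filter_upwards [hall] with ω hω j n hn u hu
    exact abs_CdotEst_le P hn (hω n j) hu
  · intro δ hδ j ε hε
    obtain ⟨κ, hκ, hdet⟩ := exists_tolerance P hXmeas hcont (hpd_deriv j) (hpd_cont j) hδ.1 hε
    rw [Metric.tendsto_atTop]
    intro η hη
    obtain ⟨n₁, hn₁⟩ := exists_goodOsc P hXmeas (map_eq_of_stationary hXmeas hXstat) hcont
      (fun τ hτ => exists_tail_le ha hmix hτ) hκ (half_pos hη)
    obtain ⟨n₂, hn₂⟩ := exists_nat_ge ((1 / κ) ^ 2)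
    refine ⟨max (max n₁ n₂) 1, fun n hn => ?_⟩
    have hnn₁ : n₁ ≤ n := ((le_max_left _ _).trans (le_max_left _ _)).trans hn
    have hnn₂ : n₂ ≤ n := ((le_max_right _ _).trans (le_max_left _ _)).trans hn
    have hn0 : 1 ≤ n := (le_max_right _ _).trans hn
    have hnκ : 1 / √n ≤ κ := by
      have h1 : 1 / κ ≤ √n := by
        refine Real.le_sqrt_of_sq_le (hn₂.trans ?_)
        exact_mod_cast hnn₂
      rw [div_le_iff₀ hκ] at h1
      have hs : 0 < √(n : ℝ) := Real.sqrt_pos.2 (by exact_mod_cast hn0)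
      rw [div_le_iff₀ hs]
      linarith
    have hae : ∀ᵐ ω ∂P, ∀ j : Fin d, ∀ i ∈ Finset.Icc (1 : ℤ) (n : ℤ),
        ∀ i' ∈ Finset.Icc (1 : ℤ) (n : ℤ), i ≠ i' → X i ω j ≠ X i' ω j :=
      ae_all_iff.2 fun j => hties n j
    set S : Set Ω := {ω | ε < sSup {x : ℝ | ∃ u : Fin d → ℝ,
      (∀ i, u i ∈ Icc (0 : ℝ) 1) ∧ u j ∈ Icc δ (1 - δ) ∧
      x = |CdotEst P X j n u ω - Cdot j u|}} with hS
    have hsub : S ≤ᵐ[P] {ω | ¬ GoodOsc (empMeas X n ω) (P.map (X 1)) κ (1 / √n)} := by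
      filter_upwards [hae] with ω hω hωS
      refine fun hgood => absurd (show ε < _ from hωS) (not_lt.2 ?_)
      refine Real.sSup_le ?_ hε.le
      rintro x ⟨u, hu, huj, rfl⟩
      exact hdet n ω hn0 hnκ hω hgood u hu huj
    have hle : P.real S ≤ η / 2 :=
      (ENNReal.toReal_mono (measure_ne_top _ _) (measure_mono_ae hsub)).trans (hn₁ n hnn₁)
    change dist (P.real S) 0 < η
    rw [Real.dist_eq, sub_zero, abs_of_nonneg measureReal_nonneg]
    linarith

end Stmt17
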